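/- arXiv:1508.06132 — 4 statements merged into one kernel-verified Lean document; each statement's English description precedes it below -/
import Mathlib

section
/- The exponential measure μ on ℝⁿ satisfies Carleman's condition: for each i = 1,…,n, the series ∑_{k=1}^∞ (∫ x_i^{2k} dμ(x))^{−1/(2k)} diverges to +∞. -/
open MeasureTheory MvPolynomial Filter Topology

noncomputable def gaussianMeasure (n : ℕ) : Measure (Fin n → ℝ) :=
  volume.withDensity fun x =>
    ENNReal.ofReal ((2 * Real.pi) ^ (-(n : ℝ) / 2) * Real.exp (-(∑ i, x i ^ 2) / 2))

noncomputable def expMeasure (n : ℕ) : Measure (Fin n → ℝ) :=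
  (volume.restrict {x : Fin n → ℝ | ∀ i, 0 ≤ x i}).withDensity fun x =>
    ENNReal.ofReal (Real.exp (-(∑ i, x i)))

/-- degree |α| of a multi-index -/
def fdeg {n : ℕ} (α : Fin n →₀ ℕ) : ℕ := α.sum fun _ e => e

/-- Riesz functional `L_u(p)` of a (pseudo-)moment sequence `u`. -/
noncomputable def riesz {n : ℕ} (u : (Fin n →₀ ℕ) → ℝ) (p : MvPolynomial (Fin n) ℝ) : ℝ :=
  ∑ α ∈ p.support, p.coeff α * u α

/-- Positive semidefiniteness of the moment matrix `M_d(u)`, expressed via its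
quadratic form: `L_u(p²) ≥ 0` for all polynomials of degree at most `d`. -/
def MomPSD {n : ℕ} (d : ℕ) (u : (Fin n →₀ ℕ) → ℝ) : Prop :=
  ∀ p : MvPolynomial (Fin n) ℝ, p.totalDegree ≤ d → 0 ≤ riesz u (p ^ 2)

/-- Positive semidefiniteness of the localizing matrix `M_k(g u)`, expressed via its
quadratic form: `L_u(g·p²) ≥ 0` for all polynomials of degree at most `k`. -/
def LocPSD {n : ℕ} (k : ℕ) (g : MvPolynomial (Fin n) ℝ) (u : (Fin n →₀ ℕ) → ℝ) : Prop :=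
  ∀ p : MvPolynomial (Fin n) ℝ, p.totalDegree ≤ k → 0 ≤ riesz u (g * p ^ 2)

/-- moments of the standard Gaussian measure -/
noncomputable def gmom (n : ℕ) (α : Fin n →₀ ℕ) : ℝ :=
  ∫ x, (∏ i, x i ^ α i) ∂gaussianMeasure n

/-- `d_j = ⌈deg g / 2⌉` -/
def dHalf {n : ℕ} (g : MvPolynomial (Fin n) ℝ) : ℕ := (g.totalDegree + 1) / 2

/-- the basic closed semi-algebraic set determined by the polynomials `g_j` -/
def semialg {n m : ℕ} (g : Fin m → MvPolynomial (Fin n) ℝ) : Set (Fin n → ℝ) :=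
  {x | ∀ j, 0 ≤ eval x (g j)}

/-- feasibility for the primal semidefinite relaxation of order `d` (Gaussian measure) -/
def Feasible {n m : ℕ} (g : Fin m → MvPolynomial (Fin n) ℝ) (d : ℕ)
    (u v : (Fin n →₀ ℕ) → ℝ) : Prop :=
  (∀ α : Fin n →₀ ℕ, fdeg α ≤ 2 * d → u α + v α = gmom n α) ∧
  MomPSD d u ∧ MomPSD d v ∧ ∀ j, LocPSD (d - dHalf (g j)) (g j) u

/-- the value `ō_d(f)` of the primal semidefinite relaxation of order `d` -/
noncomputable def obar {n m : ℕ} (g : Fin m → MvPolynomial (Fin n) ℝ) (d : ℕ)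
    (f : MvPolynomial (Fin n) ℝ) : ℝ :=
  sSup {r | ∃ u v, Feasible g d u v ∧ r = riesz u f}

/-- the Stokes polynomial `p_{i,α} = ∂(x^α f)/∂x_i − x_i · x^α f` (Gaussian case) -/
noncomputable def pStokesG {n : ℕ} (f : MvPolynomial (Fin n) ℝ) (i : Fin n) (α : Fin n →₀ ℕ) :
    MvPolynomial (Fin n) ℝ :=
  pderiv i (monomial α 1 * f) - X i * (monomial α 1 * f)

/-- the Stokes polynomial `p_{i,α} = ∂(x^α f)/∂x_i − x^α f` (exponential case) -/
noncomputable def pStokesE {n : ℕ} (f : MvPolynomial (Fin n) ℝ) (i : Fin n) (α : Fin n →₀ ℕ) :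
    MvPolynomial (Fin n) ℝ :=
  pderiv i (monomial α 1 * f) - monomial α 1 * f

/-- feasibility for the Stokes-augmented semidefinite relaxation of order `d` -/
def FeasibleS {n m : ℕ} (g : Fin m → MvPolynomial (Fin n) ℝ) (f : MvPolynomial (Fin n) ℝ)
    (d : ℕ) (u v : (Fin n →₀ ℕ) → ℝ) : Prop :=
  Feasible g d u v ∧
  ∀ (i : Fin n) (α : Fin n →₀ ℕ), (pStokesG f i α).totalDegree ≤ 2 * d →
    riesz u (pStokesG f i α) = 0

/-- the value `ω̄_d` of the Stokes-augmented semidefinite relaxation of order `d` -/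
noncomputable def omegabar {n m : ℕ} (g : Fin m → MvPolynomial (Fin n) ℝ)
    (f : MvPolynomial (Fin n) ℝ) (d : ℕ) : ℝ :=
  sSup {r | ∃ u v, FeasibleS g f d u v ∧ r = u 0}

/-- `p ∈ Σ[x]_d`: `p` is a sum of squares of polynomials of degree at most `d` -/
def IsSOS {n : ℕ} (d : ℕ) (p : MvPolynomial (Fin n) ℝ) : Prop :=
  ∃ (k : ℕ) (q : Fin k → MvPolynomial (Fin n) ℝ),
    (∀ i, (q i).totalDegree ≤ d) ∧ p = ∑ i, q i ^ 2

/-- membership in the truncated quadratic module `Q_{2d}(Ω)` -/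
def InQM {n m : ℕ} (g : Fin m → MvPolynomial (Fin n) ℝ) (d : ℕ)
    (p : MvPolynomial (Fin n) ℝ) : Prop :=
  ∃ (σ₀ : MvPolynomial (Fin n) ℝ) (σ : Fin m → MvPolynomial (Fin n) ℝ),
    IsSOS d σ₀ ∧ (∀ j, IsSOS (d - dHalf (g j)) (σ j)) ∧ p = σ₀ + ∑ j, σ j * g j

/-!
The exponential density is a product over the coordinates, so the moment `∫ x_i ^ m dμ` is the
one-dimensional Gamma integral `m!`. As `(2k)! ≤ (2k) ^ (2k)`, the `k`-th term of the Carleman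
series is at least `1 / (2k)`, and the series diverges with the harmonic series.
-/

theorem inv_le_rpow_neg_one_div_of_le_rpow {a b s : ℝ} (ha : 0 < a) (hb : 0 < b) (hs : 0 < s)
    (h : a ≤ b ^ s) : b⁻¹ ≤ a ^ (-1 / s) := by
  rw [neg_div, one_div, ← inv_neg,
    Real.le_rpow_inv_iff_of_neg (inv_pos.2 hb) ha (neg_neg_of_pos hs),
    Real.rpow_neg_eq_inv_rpow, inv_inv]
  exact h

theorem tendsto_sum_Icc_one_natCast_inv_atTop :
    Tendsto (fun N : ℕ => ∑ k ∈ Finset.Icc 1 N, (k : ℝ)⁻¹) atTop atTop := by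
  refine Real.tendsto_sum_range_one_div_nat_succ_atTop.congr fun N => ?_
  simpa [Finset.Ico_add_one_right_eq_Icc]
    using Finset.sum_Ico_add' (fun k : ℕ => (k : ℝ)⁻¹) 0 N 1

theorem tendsto_sum_Icc_one_rpow_atTop_of_le_rpow {a : ℕ → ℝ} {C s : ℝ} (hC : 0 < C) (hs : 0 < s)
    (ha : ∀ k, 1 ≤ k → 0 < a k) (hle : ∀ k : ℕ, 1 ≤ k → a k ≤ (C * k) ^ (s * k)) :
    Tendsto (fun N : ℕ => ∑ k ∈ Finset.Icc 1 N, a k ^ (-1 / (s * k))) atTop atTop := by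
  refine tendsto_atTop_mono (fun N => ?_)
    (tendsto_sum_Icc_one_natCast_inv_atTop.const_mul_atTop (inv_pos.2 hC))
  rw [Finset.mul_sum]
  refine Finset.sum_le_sum fun k hk => ?_
  have one_le_k : 1 ≤ k := (Finset.mem_Icc.1 hk).1
  have k_pos : (0 : ℝ) < k := by exact_mod_cast one_le_k
  rw [← mul_inv]
  exact inv_le_rpow_neg_one_div_of_le_rpow (ha k one_le_k) (mul_pos hC k_pos) (mul_pos hs k_pos)
    (hle k one_le_k)

theorem integral_Ici_exp_neg_smul_pow (m : ℕ) :
    ∫ t in Set.Ici (0 : ℝ), Real.exp (-t) • t ^ m = (m.factorial : ℝ) := by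
  rw [integral_Ici_eq_integral_Ioi, ← Real.Gamma_nat_eq_factorial,
    Real.Gamma_eq_integral (by positivity)]
  simp

theorem integral_expMeasure {E : Type*} [NormedAddCommGroup E] [NormedSpace ℝ E] {n : ℕ}
    (f : (Fin n → ℝ) → E) :
    ∫ x, f x ∂expMeasure n =
      ∫ x, Real.exp (-∑ j, x j) • f x
        ∂Measure.pi fun _ : Fin n => volume.restrict (Set.Ici (0 : ℝ)) := by
  have orthant_eq_pi : {x : Fin n → ℝ | ∀ j, 0 ≤ x j} = Set.univ.pi fun _ => Set.Ici 0 := by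
    ext x
    simp [Pi.le_def]
  rw [expMeasure, integral_withDensity_eq_integral_toReal_smul (by fun_prop) (by simp),
    orthant_eq_pi, volume_pi, Measure.restrict_pi_pi]
  simp only [ENNReal.toReal_ofReal (Real.exp_nonneg _)]

theorem integral_fintype_prod_expMeasure {𝕜 : Type*} [RCLike 𝕜] {n : ℕ} (f : Fin n → ℝ → 𝕜) :
    ∫ x, ∏ j, f j (x j) ∂expMeasure n =
      ∏ j, ∫ t in Set.Ici (0 : ℝ), Real.exp (-t) • f j t := by
  rw [integral_expMeasure, ← integral_fintype_prod_eq_prod]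
  simp only [← Finset.sum_neg_distrib, Real.exp_sum, Finset.prod_smul]

theorem integral_prod_pow_expMeasure {n : ℕ} (α : Fin n → ℕ) :
    ∫ x, ∏ j, x j ^ α j ∂expMeasure n = ∏ j, ((α j).factorial : ℝ) := by
  simp only [integral_fintype_prod_expMeasure fun j t => t ^ α j, integral_Ici_exp_neg_smul_pow]

theorem integral_pow_expMeasure {n : ℕ} (i : Fin n) (m : ℕ) :
    ∫ x, x i ^ m ∂expMeasure n = (m.factorial : ℝ) := by
  simpa [pow_ite, apply_ite Nat.factorial]
    using integral_prod_pow_expMeasure fun j => if j = i then m else 0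

/-- the exponential measure on ℝⁿ satisfies Carleman's condition:
for each coordinate `i`, `∑_{k≥1} (∫ x_i^{2k} dμ)^{−1/(2k)} = +∞`. -/
theorem stmt4 (n : ℕ) (i : Fin n) :
    Tendsto (fun N : ℕ => ∑ k ∈ Finset.Icc 1 N,
        (∫ x, x i ^ (2 * k) ∂expMeasure n) ^ (-(1 : ℝ) / (2 * (k : ℝ))))
      atTop atTop := by
  simp only [integral_pow_expMeasure]
  refine tendsto_sum_Icc_one_rpow_atTop_of_le_rpow (C := 2) (a := fun k => ((2 * k).factorial : ℝ))
    two_pos two_pos (fun k _ => by positivity) fun k _ => ?_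
  exact_mod_cast Nat.factorial_le_pow (2 * k)
end

section
/- Let μ be the standard Gaussian measure on ℝⁿ, let Ω = {x ∈ ℝⁿ : g_j(x) ≥ 0, j = 1,…,m}, and assume both Ω and ℝⁿ ∖ Ω have nonempty interior. Let f ∈ ℝ[x] be a polynomial that is strictly positive almost everywhere on Ω. Then for every d ≥ d₀, the primal semidefinite program defining ō_d(f) attains its supremum, the dual program defining ō*_d(f) attains its infimum, and strong duality holds: ō_d(f) = ō*_d(f). -/
open MeasureTheory MvPolynomial Filter Topology

/-!
The dual program minimizes `∫ p dμ` over `p ∈ Σ[x]_d` with `p - f ∈ Q_{2d}(Ω)`. By polarization it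
is feasible for every `f` of degree at most `2d`, so its value is a finite sublinear function of
`f`. A Hahn–Banach functional that lies below this function and touches it at `f` is nonnegative on
`Q_{2d}(Ω)` and bounded by `∫ · dμ` on `Σ[x]_d`: its moments are an optimal primal solution, without
duality gap.

The dual infimum is attained because `∫ · dμ` is strictly positive on nonzero elements of `Σ[x]_d`,
so that its sublevel sets in `Σ[x]_d` are compact, once `Σ[x]_d` and `Q_{2d}(Ω)` are known to be
closed. The latter holds since both are generated by compact sets, the polynomials `g_j q²` with `q`
on a unit sphere, which are strictly positive under integration over the interior of `Ω`.
-/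

section ConeWithCompactBase

open scoped Pointwise

variable {E : Type*} [NormedAddCommGroup E] [NormedSpace ℝ E]

theorem mem_hull_iff_mem_smul_convexHull {S : Set E} (hS : S.Nonempty) {l : E →L[ℝ] ℝ}
    (hl : ∀ s ∈ S, 0 < l s) {x : E} :
    x ∈ PointedCone.hull ℝ S ↔
      0 ≤ l x ∧ x ∈ l x • convexHull ℝ ((fun s => (l s)⁻¹ • s) '' S) := by
  set K := convexHull ℝ ((fun s => (l s)⁻¹ • s) '' S)
  have hK_convex : Convex ℝ K := convex_convexHull ℝ _
  have hSK : ∀ s ∈ S, (l s)⁻¹ • s ∈ K := fun s hs => subset_convexHull ℝ _ ⟨s, hs, rfl⟩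
  have hK_hull : K ⊆ PointedCone.hull ℝ S := by
    refine convexHull_min ?_ (PointedCone.hull ℝ S).convex
    rintro _ ⟨s, hs, rfl⟩
    exact PointedCone.smul_mem _ (inv_nonneg.2 (hl s hs).le) (PointedCone.subset_hull hs)
  constructor
  · intro hx
    induction hx using Submodule.span_induction with
    | mem s hs => exact ⟨(hl s hs).le, _, hSK s hs, smul_inv_smul₀ (hl s hs).ne' s⟩
    | zero =>
      obtain ⟨s, hs⟩ := hS
      simpa using ⟨_, hSK s hs, zero_smul ℝ _⟩
    | add x y _ _ hx hy =>
      rw [map_add, hK_convex.add_smul hx.1 hy.1]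
      exact ⟨add_nonneg hx.1 hy.1, Set.add_mem_add hx.2 hy.2⟩
    | smul c x _ hx =>
      rw [Nonneg.mk_smul, map_smul, smul_eq_mul, mul_smul]
      exact ⟨mul_nonneg c.2 hx.1, Set.smul_mem_smul_set hx.2⟩
  · rintro ⟨hx, k, hk, hkx⟩
    rw [← hkx]
    exact PointedCone.smul_mem _ hx (hK_hull hk)

theorem isClosed_setOf_mem_smul {K : Set E} (hK : IsCompact K) (l : E →L[ℝ] ℝ) :
    IsClosed {x | x ∈ l x • K} := by
  have : CompactSpace K := isCompact_iff_compactSpace.1 hK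
  have hgraph : IsClosed {kx : K × E | l kx.2 • (kx.1 : E) = kx.2} :=
    isClosed_eq (by fun_prop) (by fun_prop)
  convert isClosedMap_snd_of_compactSpace _ hgraph
  ext x
  simp [Set.mem_smul_set]

variable [FiniteDimensional ℝ E]

theorem isCompact_sublevel_of_pos {C : PointedCone ℝ E} (hC : IsClosed (C : Set E))
    {l : E →L[ℝ] ℝ} (hl : ∀ x ∈ C, x ≠ 0 → 0 < l x) (c : ℝ) :
    IsCompact {x ∈ (C : Set E) | l x ≤ c} := by
  have hclosed : IsClosed {x ∈ (C : Set E) | l x ≤ c} :=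
    hC.inter (isClosed_le l.continuous continuous_const)
  have hpos : ∀ x ∈ (C : Set E) ∩ Metric.sphere 0 1, 0 < l x := fun x hx =>
    hl x hx.1 (ne_zero_of_mem_unit_sphere ⟨x, hx.2⟩)
  obtain ⟨δ, hδ, hδl⟩ :=
    ((isCompact_sphere 0 1).inter_left hC).exists_forall_le' l.continuous.continuousOn hpos
  have hnorm : ∀ x ∈ C, δ * ‖x‖ ≤ l x := by
    intro x hx
    rcases eq_or_ne x 0 with rfl | hx0
    · simp
    have hx_pos : 0 < ‖x‖ := norm_pos_iff.2 hx0
    have hle := hδl (‖x‖⁻¹ • x) ⟨C.smul_mem (inv_nonneg.2 hx_pos.le) hx, by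
      simp [norm_smul, hx_pos.ne']⟩
    rwa [map_smul, smul_eq_mul, le_inv_mul_iff₀' hx_pos] at hle
  refine Metric.isCompact_of_isClosed_isBounded hclosed
    ((isBounded_iff_forall_norm_le).2 ⟨c / δ, fun x hx => ?_⟩)
  rw [le_div_iff₀' hδ]
  exact (hnorm x hx.1).trans hx.2

-- Carathéodory's theorem bounds the number of points in a convex combination.
theorem convexHull_eq_iUnion_image_stdSimplex (K : Set E) :
    convexHull ℝ K = ⋃ k ∈ Set.Iic (Module.finrank ℝ E + 1),
      (fun wz : (Fin k → ℝ) × (Fin k → E) => ∑ i, wz.1 i • wz.2 i) ''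
        (stdSimplex ℝ (Fin k) ×ˢ Set.univ.pi fun _ => K) := by
  refine Set.Subset.antisymm (fun x hx => ?_) (Set.iUnion₂_subset fun k _ => ?_)
  · obtain ⟨ι, _, z, w, hzK, hz, hw, hw_sum, rfl⟩ := eq_pos_convex_span_of_mem_convexHull hx
    let e := Fintype.equivFin ι
    have hcard : Fintype.card ι ≤ Module.finrank ℝ E + 1 :=
      hz.card_le_finrank_succ.trans (Nat.succ_le_succ (Submodule.finrank_le _))
    refine Set.mem_biUnion hcard ⟨(w ∘ e.symm, z ∘ e.symm), ⟨⟨fun i => (hw _).le, ?_⟩, ?_⟩, ?_⟩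
    · exact (e.symm.sum_comp w).trans hw_sum
    · exact fun i _ => hzK ⟨_, rfl⟩
    · exact e.symm.sum_comp fun i => w i • z i
  · rintro _ ⟨⟨w, z⟩, ⟨hw, hz⟩, rfl⟩
    exact (convex_convexHull ℝ K).sum_mem (fun i _ => hw.1 i) hw.2
      fun i _ => subset_convexHull ℝ K (hz i trivial)

theorem isCompact_convexHull {K : Set E} (hK : IsCompact K) : IsCompact (convexHull ℝ K) := by
  rw [convexHull_eq_iUnion_image_stdSimplex]
  exact (Set.finite_Iic _).isCompact_biUnion fun k _ =>
    ((isCompact_stdSimplex ℝ _).prod (isCompact_univ_pi fun _ => hK)).image (by fun_prop)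

theorem isClosed_hull_of_isCompact {S : Set E} (hS : IsCompact S) {l : E →L[ℝ] ℝ}
    (hl : ∀ s ∈ S, 0 < l s) : IsClosed (PointedCone.hull ℝ S : Set E) := by
  rcases S.eq_empty_or_nonempty with rfl | hne
  · simp [PointedCone.hull]
  have hbase : IsCompact ((fun s => (l s)⁻¹ • s) '' S) :=
    hS.image_of_continuousOn
      ((l.continuous.continuousOn.inv₀ fun s hs => (hl s hs).ne').smul continuousOn_id)
  have heq : (PointedCone.hull ℝ S : Set E) =
      {x | 0 ≤ l x} ∩ {x | x ∈ l x • convexHull ℝ ((fun s => (l s)⁻¹ • s) '' S)} :=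
    Set.ext fun x => mem_hull_iff_mem_smul_convexHull hne hl
  rw [heq]
  exact (isClosed_le continuous_const l.continuous).inter
    (isClosed_setOf_mem_smul (isCompact_convexHull hbase) l)

theorem isClosed_hull_iUnion_range_quadratic {ι : Type*} [Finite ι] {F : ι → Type*}
    [∀ i, NormedAddCommGroup (F i)] [∀ i, NormedSpace ℝ (F i)] [∀ i, FiniteDimensional ℝ (F i)]
    (B : ∀ i, F i →ₗ[ℝ] F i →ₗ[ℝ] E) {l : E →ₗ[ℝ] ℝ} (hl : ∀ i x, x ≠ 0 → 0 < l (B i x x)) :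
    IsClosed (PointedCone.hull ℝ (⋃ i, Set.range fun x => B i x x) : Set E) := by
  have hcont : ∀ i, Continuous fun x => B i x x := fun i =>
    ((B i).toContinuousBilinearMap.continuous).clm_apply continuous_id
  have hcompact : IsCompact (⋃ i, (fun x => B i x x) '' Metric.sphere 0 1) :=
    isCompact_iUnion fun i => (isCompact_sphere 0 1).image (hcont i)
  have heq : PointedCone.hull ℝ (⋃ i, Set.range fun x => B i x x) =
      PointedCone.hull ℝ (⋃ i, (fun x => B i x x) '' Metric.sphere 0 1) := by
    refine le_antisymm (Submodule.span_le.2 (Set.iUnion_subset fun i => ?_))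
      (Submodule.span_mono (Set.iUnion_mono fun i => Set.image_subset_range _ _))
    rintro _ ⟨x, rfl⟩
    rcases eq_or_ne x 0 with rfl | hx
    · simp
    have hsphere : ‖x‖⁻¹ • x ∈ Metric.sphere 0 1 := by simp [norm_smul, norm_ne_zero_iff.2 hx]
    have hnorm : ‖x‖ ^ 2 * (‖x‖⁻¹ * ‖x‖⁻¹) = 1 := by field [norm_ne_zero_iff.2 hx]
    have hscale : B i x x = (‖x‖ ^ 2) • B i (‖x‖⁻¹ • x) (‖x‖⁻¹ • x) := by
      simp only [map_smul, LinearMap.smul_apply, smul_smul, hnorm, one_smul]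
    simp only [hscale]
    exact PointedCone.smul_mem _ (sq_nonneg _)
      (PointedCone.subset_hull (Set.mem_iUnion_of_mem i ⟨_, hsphere, rfl⟩))
  rw [heq]
  refine isClosed_hull_of_isCompact hcompact (l := l.toContinuousLinearMap) ?_
  rintro _ ⟨_, ⟨i, rfl⟩, x, hx, rfl⟩
  exact hl i x (ne_zero_of_mem_unit_sphere ⟨x, hx⟩)

end ConeWithCompactBase

section ConicDuality

theorem exists_linearMap_le_sublinear_apply_eq {E : Type*} [AddCommGroup E] [Module ℝ E]
    {N : E → ℝ} (N_hom : ∀ c : ℝ, 0 < c → ∀ x, N (c • x) = c * N x)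
    (N_add : ∀ x y, N (x + y) ≤ N x + N y) (x : E) :
    ∃ u : E →ₗ[ℝ] ℝ, u x = N x ∧ ∀ y, u y ≤ N y := by
  have N_zero : N 0 = 0 := by
    have := N_hom 2 two_pos 0
    rw [smul_zero] at this
    linarith
  have mul_le : ∀ c : ℝ, c * N x ≤ N (c • x) := by
    intro c
    rcases lt_trichotomy c 0 with hc | rfl | hc
    · have hsum := N_add (c • x) (-c • x)
      rw [neg_smul, add_neg_cancel, N_zero, ← neg_smul, N_hom (-c) (neg_pos.2 hc)] at hsum
      linarith
    · simp [N_zero]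
    · exact (N_hom c hc x).ge
  have smul_eq : ∀ c : ℝ, c • x = 0 → c • N x = 0 := by
    intro c hc
    rcases smul_eq_zero.1 hc with rfl | rfl <;> simp [N_zero]
  obtain ⟨u, hu, huN⟩ := exists_extension_of_le_sublinear
    (LinearPMap.mkSpanSingleton' x (N x) smul_eq) N N_hom N_add (by
      rintro ⟨_, hy⟩
      obtain ⟨c, rfl⟩ := Submodule.mem_span_singleton.1 hy
      rw [LinearPMap.mkSpanSingleton'_apply]
      exact mul_le c)
  exact ⟨u, (hu ⟨x, Submodule.mem_span_singleton_self x⟩).trans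
    (LinearPMap.mkSpanSingleton'_apply_self ..), huN⟩

variable {E : Type*}

/-- The values of the conic program `inf {L p : p ∈ P, p - f ∈ Q}`. -/
def conicValues [AddCommGroup E] [Module ℝ E] (P Q : PointedCone ℝ E) (L : E →ₗ[ℝ] ℝ) (f : E) :
    Set ℝ :=
  L '' {p | p ∈ P ∧ p - f ∈ Q}

-- The value of the program is sublinear in `f`; a linear functional below it that touches it at
-- `f` is an optimal solution of the dual program.
theorem exists_isGLB_conicValues [AddCommGroup E] [Module ℝ E] {P Q : PointedCone ℝ E}
    {L : E →ₗ[ℝ] ℝ} (hL : ∀ p ∈ P, 0 ≤ L p) (hne : ∀ h, (conicValues P Q L h).Nonempty) (f : E) :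
    ∃ u : E →ₗ[ℝ] ℝ, (∀ q ∈ Q, 0 ≤ u q) ∧ (∀ p ∈ P, u p ≤ L p) ∧
      IsGLB (conicValues P Q L f) (u f) := by
  have hglb : ∀ h, ∃ r, IsGLB (conicValues P Q L h) r := fun h =>
    Real.exists_isGLB (hne h) ⟨0, by rintro _ ⟨p, hp, rfl⟩; exact hL p hp.1⟩
  choose N hN using hglb
  have N_le : ∀ {h p}, p ∈ P → p - h ∈ Q → N h ≤ L p := fun hp hq => (hN _).1 ⟨_, ⟨hp, hq⟩, rfl⟩
  have N_add : ∀ x y, N (x + y) ≤ N x + N y := by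
    refine fun x y => ((hN x).add (hN y)).mono (hN _) ?_
    rintro _ ⟨_, ⟨p, hp, rfl⟩, _, ⟨p', hp', rfl⟩, rfl⟩
    refine ⟨p + p', ⟨P.add_mem hp.1 hp'.1, ?_⟩, map_add L p p'⟩
    rw [add_sub_add_comm]
    exact Q.add_mem hp.2 hp'.2
  have N_smul_le : ∀ c : ℝ, 0 < c → ∀ x, N (c • x) ≤ c * N x := by
    intro c hc x
    rw [← div_le_iff₀' hc]
    refine (hN x).2 ?_
    rintro _ ⟨p, hp, rfl⟩
    rw [div_le_iff₀' hc, ← smul_eq_mul, ← map_smul]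
    exact N_le (P.smul_mem hc.le hp.1) (smul_sub c p x ▸ Q.smul_mem hc.le hp.2)
  have N_hom : ∀ c : ℝ, 0 < c → ∀ x, N (c • x) = c * N x := by
    refine fun c hc x => (N_smul_le c hc x).antisymm ?_
    have := N_smul_le c⁻¹ (inv_pos.2 hc) (c • x)
    rwa [inv_smul_smul₀ hc.ne', le_inv_mul_iff₀ hc] at this
  obtain ⟨u, huf, huN⟩ := exists_linearMap_le_sublinear_apply_eq N_hom N_add f
  refine ⟨u, fun q hq => ?_, fun p hp => ?_, huf ▸ hN f⟩
  · have := (huN (-q)).trans (N_le P.zero_mem (by simpa using hq))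
    rw [map_neg, map_zero] at this
    linarith
  · exact (huN p).trans (N_le hp (by simp))

variable [NormedAddCommGroup E] [NormedSpace ℝ E] [FiniteDimensional ℝ E]

theorem exists_isLeast_conicValues {P Q : PointedCone ℝ E} (hP : IsClosed (P : Set E))
    (hQ : IsClosed (Q : Set E)) {L : E →ₗ[ℝ] ℝ} (hL : ∀ p ∈ P, p ≠ 0 → 0 < L p) {f : E}
    (hne : (conicValues P Q L f).Nonempty) : ∃ r, IsLeast (conicValues P Q L f) r := by
  obtain ⟨_, p₀, hp₀, rfl⟩ := hne
  have hcompact : IsCompact ({p ∈ (P : Set E) | L p ≤ L p₀} ∩ {p | p - f ∈ Q}) :=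
    (isCompact_sublevel_of_pos hP (l := L.toContinuousLinearMap) hL (L p₀)).inter_right
      (hQ.preimage (continuous_id.sub continuous_const))
  obtain ⟨p, hp, hmin⟩ := hcompact.exists_isMinOn ⟨p₀, ⟨hp₀.1, le_rfl⟩, hp₀.2⟩
    L.toContinuousLinearMap.continuous.continuousOn
  refine ⟨L p, ⟨p, ⟨hp.1.1, hp.2⟩, rfl⟩, ?_⟩
  rintro _ ⟨p', hp', rfl⟩
  rcases le_total (L p') (L p₀) with hle | hle
  · exact hmin ⟨⟨hp'.1, hle⟩, hp'.2⟩
  · exact hp.1.2.trans hle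

theorem exists_conic_strong_duality {P Q : PointedCone ℝ E} (hP : IsClosed (P : Set E))
    (hQ : IsClosed (Q : Set E)) {L : E →ₗ[ℝ] ℝ} (hL : ∀ p ∈ P, p ≠ 0 → 0 < L p)
    (hne : ∀ h, (conicValues P Q L h).Nonempty) (f : E) :
    ∃ u : E →ₗ[ℝ] ℝ, (∀ q ∈ Q, 0 ≤ u q) ∧ (∀ p ∈ P, u p ≤ L p) ∧
      ∃ p ∈ P, p - f ∈ Q ∧ L p = u f := by
  have hL_nonneg : ∀ p ∈ P, 0 ≤ L p := fun p hp => by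
    rcases eq_or_ne p 0 with rfl | hp0
    · simp
    · exact (hL p hp hp0).le
  obtain ⟨u, huQ, huP, hglb⟩ := exists_isGLB_conicValues hL_nonneg hne f
  obtain ⟨r, hr⟩ := exists_isLeast_conicValues hP hQ hL (hne f)
  obtain ⟨p, ⟨hp, hpf⟩, hpr⟩ := hr.1
  exact ⟨u, huQ, huP, p, hp, hpf, hpr.trans (hr.isGLB.unique hglb)⟩

end ConicDuality

section RieszFunctional

variable {n : ℕ}

/-- The Riesz functional `L_u` as a linear form on polynomials. -/
noncomputable def rieszLinear (u : (Fin n →₀ ℕ) → ℝ) : MvPolynomial (Fin n) ℝ →ₗ[ℝ] ℝ :=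
  (basisMonomials (Fin n) ℝ).constr ℝ u

theorem rieszLinear_apply (u : (Fin n →₀ ℕ) → ℝ) (p : MvPolynomial (Fin n) ℝ) :
    rieszLinear u p = riesz u p :=
  (basisMonomials (Fin n) ℝ).constr_apply ℝ u p

theorem riesz_monomial_seq (U : MvPolynomial (Fin n) ℝ →ₗ[ℝ] ℝ) (p : MvPolynomial (Fin n) ℝ) :
    riesz (fun α => U (monomial α 1)) p = U p := by
  rw [← rieszLinear_apply]
  exact congrArg (· p) ((basisMonomials (Fin n) ℝ).constr_self ℝ U)

theorem riesz_add_seq (u v : (Fin n →₀ ℕ) → ℝ) (p : MvPolynomial (Fin n) ℝ) :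
    riesz (fun α => u α + v α) p = riesz u p + riesz v p := by
  simp only [riesz, mul_add, Finset.sum_add_distrib]

theorem riesz_sub_seq (u v : (Fin n →₀ ℕ) → ℝ) (p : MvPolynomial (Fin n) ℝ) :
    riesz (fun α => u α - v α) p = riesz u p - riesz v p := by
  simp only [riesz, mul_sub, Finset.sum_sub_distrib]

theorem riesz_congr {N : ℕ} {u v : (Fin n →₀ ℕ) → ℝ} {p : MvPolynomial (Fin n) ℝ}
    (hp : p.totalDegree ≤ N) (huv : ∀ α, fdeg α ≤ N → u α = v α) : riesz u p = riesz v p :=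
  Finset.sum_congr rfl fun α hα => by rw [huv α ((le_totalDegree hα).trans hp)]

end RieszFunctional

section PolynomialIntegrals

variable {n : ℕ}

theorem integrable_prod_pow_gaussianMeasure (α : Fin n →₀ ℕ) :
    Integrable (fun x : Fin n → ℝ => ∏ i, x i ^ α i) (gaussianMeasure n) := by
  have hprod : Integrable fun x : Fin n → ℝ =>
      ∏ i, (x i ^ (α i : ℝ) * Real.exp (-(1 / 2) * x i ^ 2)) :=
    Integrable.fintype_prod (f := fun i (t : ℝ) => t ^ (α i : ℝ) * Real.exp (-(1 / 2) * t ^ 2))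
      fun i => integrable_rpow_mul_exp_neg_mul_sq (by norm_num)
        (neg_one_lt_zero.trans_le (Nat.cast_nonneg _))
  rw [gaussianMeasure, integrable_withDensity_iff_integrable_smul' (by fun_prop) (by simp)]
  refine (hprod.const_mul ((2 * Real.pi) ^ (-(n : ℝ) / 2))).congr (.of_forall fun x => ?_)
  have hexp : -(1 / 2) * ∑ i, x i ^ 2 = -(∑ i, x i ^ 2) / 2 := by ring
  simp only [Real.rpow_natCast, Finset.prod_mul_distrib, ← Real.exp_sum, ← Finset.mul_sum, hexp]
  rw [ENNReal.toReal_ofReal (by positivity), smul_eq_mul]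
  ring

theorem integrable_eval_gaussianMeasure (p : MvPolynomial (Fin n) ℝ) :
    Integrable (fun x => eval x p) (gaussianMeasure n) := by
  simp_rw [eval_eq']
  exact integrable_finsetSum _ fun α _ => (integrable_prod_pow_gaussianMeasure α).const_mul _

theorem riesz_gmom (p : MvPolynomial (Fin n) ℝ) :
    riesz (gmom n) p = ∫ x, eval x p ∂gaussianMeasure n := by
  simp_rw [eval_eq']
  rw [integral_finsetSum _ fun α _ => (integrable_prod_pow_gaussianMeasure α).const_mul _]
  simp_rw [integral_const_mul]
  rfl

instance isOpenPosMeasure_gaussianMeasure : (gaussianMeasure n).IsOpenPosMeasure := by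
  have hac : (volume : Measure (Fin n → ℝ)) ≪ gaussianMeasure n := by
    refine withDensity_absolutelyContinuous' (Measurable.aemeasurable (by fun_prop))
      (.of_forall fun x => ?_)
    exact (ENNReal.ofReal_pos.2 (by positivity)).ne'
  exact hac.isOpenPosMeasure

/-- Integration of polynomials against a measure with finite moments, as a linear form. -/
noncomputable def integralLinear (μ : Measure (Fin n → ℝ))
    (hμ : ∀ p : MvPolynomial (Fin n) ℝ, Integrable (fun x => eval x p) μ) :
    MvPolynomial (Fin n) ℝ →ₗ[ℝ] ℝ where
  toFun p := ∫ x, eval x p ∂μ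
  map_add' p q := by simp only [map_add, integral_add (hμ p) (hμ q)]
  map_smul' c p := by simp only [smul_eval, integral_const_mul, smul_eq_mul, RingHom.id_apply]

theorem eq_zero_of_eval_eq_zero_on_isOpen {p : MvPolynomial (Fin n) ℝ} {U : Set (Fin n → ℝ)}
    (hU : IsOpen U) (hne : U.Nonempty) (hp : ∀ x ∈ U, eval x p = 0) : p = 0 := by
  obtain ⟨x, hx⟩ := hne
  obtain ⟨ε, hε, hball⟩ := Metric.isOpen_iff.1 hU x hx
  refine funext_set (fun i => Metric.ball (x i) ε) (fun i => ?_) fun z hz => ?_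
  · rw [Real.ball_eq_Ioo]
    exact Set.Ioo_infinite (by linarith)
  · rw [map_zero]
    exact hp z (hball (ball_pi x hε ▸ hz))

theorem setIntegral_eval_pos {μ : Measure (Fin n → ℝ)} [μ.IsOpenPosMeasure]
    {p : MvPolynomial (Fin n) ℝ} {U : Set (Fin n → ℝ)} (hU : IsOpen U) (hne : U.Nonempty)
    (hint : IntegrableOn (fun x => eval x p) U μ) (hp : p ≠ 0) (hnonneg : ∀ x ∈ U, 0 ≤ eval x p) :
    0 < ∫ x in U, eval x p ∂μ := by
  refine (setIntegral_nonneg hU.measurableSet hnonneg).lt_of_ne fun hzero => hp ?_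
  rw [eq_comm, setIntegral_eq_zero_iff_of_nonneg_ae
    (ae_restrict_of_forall_mem hU.measurableSet hnonneg) hint] at hzero
  exact eq_zero_of_eval_eq_zero_on_isOpen hU hne
    (Measure.eqOn_open_of_ae_eq hzero hU p.continuous_eval.continuousOn continuousOn_const)

end PolynomialIntegrals

section SumsOfSquares

variable {n d : ℕ} {p q : MvPolynomial (Fin n) ℝ}

theorem IsSOS.zero : IsSOS d (0 : MvPolynomial (Fin n) ℝ) :=
  ⟨0, fun _ => 0, fun _ => by simp, by simp⟩

theorem IsSOS.sq (hp : p.totalDegree ≤ d) : IsSOS d (p ^ 2) :=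
  ⟨1, fun _ => p, fun _ => hp, by simp⟩

theorem IsSOS.add (hp : IsSOS d p) (hq : IsSOS d q) : IsSOS d (p + q) := by
  obtain ⟨k, a, ha, rfl⟩ := hp
  obtain ⟨l, b, hb, rfl⟩ := hq
  refine ⟨k + l, Fin.append a b, Fin.addCases (fun i => ?_) fun i => ?_, ?_⟩
  · simp only [Fin.sum_univ_add, Fin.append_left, Fin.append_right]
  · simpa only [Fin.append_left] using ha i
  · simpa only [Fin.append_right] using hb i

theorem IsSOS.smul (hp : IsSOS d p) {c : ℝ} (hc : 0 ≤ c) : IsSOS d (c • p) := by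
  obtain ⟨k, a, ha, rfl⟩ := hp
  refine ⟨k, fun i => √c • a i, fun i => (totalDegree_smul_le _ _).trans (ha i), ?_⟩
  simp only [smul_pow, Real.sq_sqrt hc, Finset.smul_sum]

theorem IsSOS.totalDegree_le (hp : IsSOS d p) : p.totalDegree ≤ 2 * d := by
  obtain ⟨k, a, ha, rfl⟩ := hp
  exact totalDegree_finsetSum_le fun i _ =>
    (totalDegree_pow _ _).trans (Nat.mul_le_mul_left _ (ha i))

theorem IsSOS.eval_nonneg (hp : IsSOS d p) (x : Fin n → ℝ) : 0 ≤ eval x p := by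
  obtain ⟨k, a, -, rfl⟩ := hp
  simp only [map_sum, map_pow]
  exact Finset.sum_nonneg fun i _ => sq_nonneg _

theorem exists_add_eq_of_degree_le_add {σ : Type*} {α : σ →₀ ℕ} {a b : ℕ}
    (hα : α.degree ≤ a + b) : ∃ β γ : σ →₀ ℕ, β.degree ≤ a ∧ γ.degree ≤ b ∧ β + γ = α := by
  rcases le_total α.degree a with hle | hle
  · exact ⟨α, 0, hle, by simp, add_zero α⟩
  · obtain ⟨β, hβα, hβ⟩ := Finsupp.exists_le_degree_eq α a hle
    have hsum : β + (α - β) = α := add_tsub_cancel_of_le hβα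
    have hdeg := congrArg Finsupp.degree hsum
    rw [map_add] at hdeg
    exact ⟨β, α - β, hβ.le, by omega, hsum⟩

-- Polarization: `a b = ((a + b) / 2) ^ 2 - ((a - b) / 2) ^ 2`.
theorem exists_isSOS_sub_eq_mul {a b : MvPolynomial (Fin n) ℝ} (ha : a.totalDegree ≤ d)
    (hb : b.totalDegree ≤ d) : ∃ p q, IsSOS d p ∧ IsSOS d q ∧ p - q = a * b := by
  have hquarter : (0 : ℝ) ≤ 1 / 4 := by norm_num
  refine ⟨(1 / 4 : ℝ) • (a + b) ^ 2, (1 / 4 : ℝ) • (a - b) ^ 2,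
    (IsSOS.sq ((totalDegree_add _ _).trans (max_le ha hb))).smul hquarter,
    (IsSOS.sq ((totalDegree_sub _ _).trans (max_le ha hb))).smul hquarter, ?_⟩
  calc (1 / 4 : ℝ) • (a + b) ^ 2 - (1 / 4 : ℝ) • (a - b) ^ 2
      = (1 / 4 : ℝ) • (4 : ℝ) • (a * b) := by
        rw [← smul_sub, ofNat_smul_eq_nsmul ℝ 4, nsmul_eq_mul]
        congr 1
        ring
    _ = a * b := by rw [smul_smul]; norm_num

theorem exists_isSOS_sub_eq (hp : p.totalDegree ≤ 2 * d) :
    ∃ p₁ p₂, IsSOS d p₁ ∧ IsSOS d p₂ ∧ p₁ - p₂ = p := by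
  rw [p.as_sum]
  refine Finset.sum_induction _
    (fun f => ∃ p₁ p₂ : MvPolynomial (Fin n) ℝ, IsSOS d p₁ ∧ IsSOS d p₂ ∧ p₁ - p₂ = f) ?_
    ⟨0, 0, .zero, .zero, sub_self 0⟩ fun α hα => ?_
  · rintro _ _ ⟨p₁, p₂, hp₁, hp₂, rfl⟩ ⟨q₁, q₂, hq₁, hq₂, rfl⟩
    exact ⟨p₁ + q₁, p₂ + q₂, hp₁.add hq₁, hp₂.add hq₂, add_sub_add_comm ..⟩
  · obtain ⟨β, γ, hβ, hγ, hβγ⟩ :=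
      exists_add_eq_of_degree_le_add ((le_totalDegree hα).trans (hp.trans (two_mul d).le))
    rw [← hβγ, ← mul_one (coeff _ p), ← monomial_mul]
    exact exists_isSOS_sub_eq_mul ((totalDegree_monomial_le _ _).trans hβ)
      ((totalDegree_monomial_le _ _).trans hγ)

end SumsOfSquares

section BoundedDegree

/-- Polynomials in `n` variables of total degree at most `N`. -/
noncomputable abbrev BoundedDegree (n N : ℕ) : Submodule ℝ (MvPolynomial (Fin n) ℝ) :=
  restrictTotalDegree (Fin n) ℝ N

variable {n : ℕ}

/-- The norm of the coordinates in some basis. Only its topology matters, and all norms on this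
finite-dimensional space induce the same one. -/
noncomputable instance boundedDegreeNormedAddCommGroup (N : ℕ) :
    NormedAddCommGroup (BoundedDegree n N) :=
  NormedAddCommGroup.induced _ _ (Module.finBasis ℝ (BoundedDegree n N)).equivFun
    (LinearEquiv.injective _)

noncomputable instance boundedDegreeNormedSpace (N : ℕ) : NormedSpace ℝ (BoundedDegree n N) :=
  NormedSpace.induced ℝ _ _ (Module.finBasis ℝ (BoundedDegree n N)).equivFun

-- Takes precedence over the subspace topology inherited from the coefficientwise convergence
-- topology on `MvPolynomial`.
noncomputable instance boundedDegreeTopologicalSpace (N : ℕ) :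
    TopologicalSpace (BoundedDegree n N) :=
  (boundedDegreeNormedAddCommGroup N).toPseudoMetricSpace.toUniformSpace.toTopologicalSpace

/-- The bilinear map `(p, q) ↦ h p q`, whose diagonal consists of the squares weighted by `h`. -/
noncomputable def weightedMul {k N : ℕ} (h : MvPolynomial (Fin n) ℝ)
    (hN : h.totalDegree + 2 * k ≤ N) :
    BoundedDegree n k →ₗ[ℝ] BoundedDegree n k →ₗ[ℝ] BoundedDegree n N :=
  LinearMap.mk₂ ℝ
    (fun p q => ⟨h * (p * q), by
      have hp := (mem_restrictTotalDegree _ _ _).1 p.2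
      have hq := (mem_restrictTotalDegree _ _ _).1 q.2
      have hh := totalDegree_mul h (p * q : MvPolynomial (Fin n) ℝ)
      have hpq := totalDegree_mul (p : MvPolynomial (Fin n) ℝ) q
      exact (mem_restrictTotalDegree _ _ _).2 (by omega)⟩)
    (fun _ _ _ => Subtype.ext (by push_cast; ring))
    (fun _ _ _ => Subtype.ext (by simp))
    (fun _ _ _ => Subtype.ext (by push_cast; ring))
    (fun _ _ _ => Subtype.ext (by simp))

theorem coe_weightedMul_self {k N : ℕ} {h : MvPolynomial (Fin n) ℝ}
    (hN : h.totalDegree + 2 * k ≤ N) (q : BoundedDegree n k) :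
    (weightedMul h hN q q : MvPolynomial (Fin n) ℝ) = (q : MvPolynomial (Fin n) ℝ) ^ 2 * h := by
  rw [weightedMul, LinearMap.mk₂_apply]
  ring

end BoundedDegree

section QuadraticModule

variable {n m d : ℕ} {g : Fin m → MvPolynomial (Fin n) ℝ} {p q : MvPolynomial (Fin n) ℝ}

/-- The weights `g₀ = 1, g₁, …, gₘ` of the quadratic module generated by `g`. -/
noncomputable def qmWeights (g : Fin m → MvPolynomial (Fin n) ℝ) :
    Fin (m + 1) → MvPolynomial (Fin n) ℝ :=
  Fin.cons 1 g

theorem totalDegree_qmWeights_add_le (hd : ∀ j, dHalf (g j) ≤ d) (j : Fin (m + 1)) :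
    (qmWeights g j).totalDegree + 2 * (d - dHalf (qmWeights g j)) ≤ 2 * d := by
  have hj : dHalf (qmWeights g j) ≤ d := by
    refine Fin.cases ?_ hd j
    simp [qmWeights, dHalf]
  unfold dHalf at *
  omega

theorem eval_qmWeights_nonneg {x : Fin n → ℝ} (hx : x ∈ semialg g) (j : Fin (m + 1)) :
    0 ≤ eval x (qmWeights g j) := by
  refine Fin.cases ?_ hx j
  simp [qmWeights]

theorem inQM_iff_exists_qmWeights :
    InQM g d p ↔ ∃ σ : Fin (m + 1) → MvPolynomial (Fin n) ℝ,
      (∀ j, IsSOS (d - dHalf (qmWeights g j)) (σ j)) ∧ p = ∑ j, σ j * qmWeights g j := by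
  simp [InQM, qmWeights, Fin.exists_fin_succ_pi, Fin.forall_fin_succ, Fin.sum_univ_succ, dHalf,
    and_assoc]

theorem inQM_empty_iff : InQM (![] : Fin 0 → MvPolynomial (Fin n) ℝ) d p ↔ IsSOS d p := by
  simp [InQM]

theorem IsSOS.inQM (hp : IsSOS d p) : InQM g d p :=
  ⟨p, 0, hp, fun _ => .zero, by simp⟩

theorem InQM.add (hp : InQM g d p) (hq : InQM g d q) : InQM g d (p + q) := by
  obtain ⟨σ₀, σ, hσ₀, hσ, rfl⟩ := hp
  obtain ⟨τ₀, τ, hτ₀, hτ, rfl⟩ := hq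
  refine ⟨σ₀ + τ₀, σ + τ, hσ₀.add hτ₀, fun j => (hσ j).add (hτ j), ?_⟩
  simp only [Pi.add_apply, add_mul, Finset.sum_add_distrib]
  ring

theorem InQM.smul (hp : InQM g d p) {c : ℝ} (hc : 0 ≤ c) : InQM g d (c • p) := by
  obtain ⟨σ₀, σ, hσ₀, hσ, rfl⟩ := hp
  refine ⟨c • σ₀, c • σ, hσ₀.smul hc, fun j => (hσ j).smul hc, ?_⟩
  simp only [Pi.smul_apply, smul_add, Finset.smul_sum, smul_mul_assoc]

theorem inQM_sq_mul_qmWeights (j : Fin (m + 1))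
    (hq : q.totalDegree ≤ d - dHalf (qmWeights g j)) : InQM g d (q ^ 2 * qmWeights g j) := by
  refine inQM_iff_exists_qmWeights.2 ⟨Pi.single j (q ^ 2), fun i => ?_, ?_⟩
  · rcases eq_or_ne i j with rfl | hij
    · simpa using IsSOS.sq hq
    · simpa [hij] using IsSOS.zero
  · simp [Pi.single_apply]

/-- The truncated quadratic module `Q_{2d}(Ω)`, as a cone of polynomials of degree at most `2d`.
For the empty family `![]` this is the cone `Σ[x]_d` of sums of squares. -/
def qmCone (g : Fin m → MvPolynomial (Fin n) ℝ) (d : ℕ) :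
    PointedCone ℝ (BoundedDegree n (2 * d)) where
  carrier := {p | InQM g d p}
  zero_mem' := IsSOS.zero.inQM
  add_mem' := InQM.add
  smul_mem' c _ hp := InQM.smul hp c.2

theorem mem_qmCone {p : BoundedDegree n (2 * d)} : p ∈ qmCone g d ↔ InQM g d p :=
  Iff.rfl

theorem mem_qmCone_empty {p : BoundedDegree n (2 * d)} :
    p ∈ qmCone (![] : Fin 0 → MvPolynomial (Fin n) ℝ) d ↔ IsSOS d (p : MvPolynomial (Fin n) ℝ) :=
  inQM_empty_iff

theorem weightedMul_self_mem_qmCone (hd : ∀ j, dHalf (g j) ≤ d) (j : Fin (m + 1))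
    (q : BoundedDegree n (d - dHalf (qmWeights g j))) :
    weightedMul _ (totalDegree_qmWeights_add_le hd j) q q ∈ qmCone g d := by
  rw [mem_qmCone, coe_weightedMul_self]
  exact inQM_sq_mul_qmWeights _ ((mem_restrictTotalDegree _ _ _).1 q.2)

-- Zero weights are left out so that every nonzero `q` yields a nonzero generator.
theorem qmCone_eq_hull (hd : ∀ j, dHalf (g j) ≤ d) :
    qmCone g d = PointedCone.hull ℝ (⋃ j : {j // qmWeights g j ≠ 0},
      Set.range fun q => weightedMul _ (totalDegree_qmWeights_add_le hd j) q q) := by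
  refine le_antisymm (fun p hp => ?_) (Submodule.span_le.2 (Set.iUnion_subset fun j => ?_))
  · obtain ⟨σ, hσ, hp⟩ := inQM_iff_exists_qmWeights.1 (mem_qmCone.1 hp)
    choose k q hq hσq using hσ
    have hsum : p = ∑ j, ∑ i, weightedMul _ (totalDegree_qmWeights_add_le hd j)
        ⟨q j i, (mem_restrictTotalDegree _ _ _).2 (hq j i)⟩
        ⟨q j i, (mem_restrictTotalDegree _ _ _).2 (hq j i)⟩ := by
      refine Subtype.ext ?_
      simp only [hp, hσq, AddSubmonoidClass.coe_finsetSum, coe_weightedMul_self, Finset.sum_mul]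
    rw [hsum]
    refine Submodule.sum_mem _ fun j _ => Submodule.sum_mem _ fun i _ => ?_
    rcases eq_or_ne (qmWeights g j) 0 with hj | hj
    · convert Submodule.zero_mem _
      exact Subtype.ext (by simp [coe_weightedMul_self, hj])
    · exact PointedCone.subset_hull (Set.mem_iUnion_of_mem ⟨j, hj⟩ ⟨_, rfl⟩)
  · exact Set.range_subset_iff.2 (weightedMul_self_mem_qmCone hd j)

theorem isClosed_qmCone (hd : ∀ j, dHalf (g j) ≤ d) (hΩ : (interior (semialg g)).Nonempty) :
    IsClosed (qmCone g d : Set (BoundedDegree n (2 * d))) := by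
  have hint (p : MvPolynomial (Fin n) ℝ) :
      IntegrableOn (fun x => eval x p) (interior (semialg g)) (gaussianMeasure n) :=
    (integrable_eval_gaussianMeasure p).integrableOn
  rw [qmCone_eq_hull hd]
  refine isClosed_hull_iUnion_range_quadratic _
    (l := (integralLinear _ hint).domRestrict (BoundedDegree n (2 * d))) fun j q hq => ?_
  rw [LinearMap.domRestrict_apply, coe_weightedMul_self]
  refine setIntegral_eval_pos isOpen_interior hΩ (hint _) ?_ fun x hx => ?_
  · exact mul_ne_zero (pow_ne_zero 2 (Subtype.coe_ne_coe.2 hq)) j.2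
  · rw [map_mul, map_pow]
    exact mul_nonneg (sq_nonneg _) (eval_qmWeights_nonneg (interior_subset hx) j)

theorem isClosed_qmCone_empty :
    IsClosed (qmCone (![] : Fin 0 → MvPolynomial (Fin n) ℝ) d : Set (BoundedDegree n (2 * d))) :=
  isClosed_qmCone (fun j => j.elim0) (by simp [semialg])

end QuadraticModule

section MomentRelaxation

variable {n m d : ℕ} {g : Fin m → MvPolynomial (Fin n) ℝ} {u v : (Fin n →₀ ℕ) → ℝ}
  {p f : MvPolynomial (Fin n) ℝ}

theorem LocPSD.riesz_mul_nonneg {k : ℕ} {h σ : MvPolynomial (Fin n) ℝ} (hu : LocPSD k h u)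
    (hσ : IsSOS k σ) : 0 ≤ riesz u (σ * h) := by
  obtain ⟨l, q, hq, rfl⟩ := hσ
  rw [Finset.sum_mul, ← rieszLinear_apply, map_sum]
  refine Finset.sum_nonneg fun i _ => ?_
  rw [rieszLinear_apply, mul_comm]
  exact hu (q i) (hq i)

theorem MomPSD.riesz_nonneg (hu : MomPSD d u) (hp : IsSOS d p) : 0 ≤ riesz u p := by
  have hu_one : LocPSD d 1 u := fun q hq => by simpa only [one_mul] using hu q hq
  simpa only [mul_one] using hu_one.riesz_mul_nonneg hp

theorem Feasible.riesz_nonneg_of_inQM (h : Feasible g d u v) (hp : InQM g d p) :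
    0 ≤ riesz u p := by
  obtain ⟨σ₀, σ, hσ₀, hσ, rfl⟩ := hp
  rw [← rieszLinear_apply, map_add, map_sum]
  simp only [rieszLinear_apply]
  exact add_nonneg (h.2.1.riesz_nonneg hσ₀)
    (Finset.sum_nonneg fun j _ => (h.2.2.2 j).riesz_mul_nonneg (hσ j))

theorem Feasible.riesz_add_riesz (h : Feasible g d u v) (hp : p.totalDegree ≤ 2 * d) :
    riesz u p + riesz v p = ∫ x, eval x p ∂gaussianMeasure n := by
  rw [← riesz_add_seq, riesz_congr hp h.1, riesz_gmom]

theorem Feasible.riesz_le_integral (h : Feasible g d u v) (hp : IsSOS d p)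
    (hpf : InQM g d (p - f)) : riesz u f ≤ ∫ x, eval x p ∂gaussianMeasure n := by
  have hu := h.riesz_nonneg_of_inQM hpf
  rw [← rieszLinear_apply, map_sub, rieszLinear_apply, rieszLinear_apply, sub_nonneg] at hu
  calc riesz u f ≤ riesz u p := hu
    _ ≤ riesz u p + riesz v p := le_add_of_nonneg_right (h.2.2.1.riesz_nonneg hp)
    _ = ∫ x, eval x p ∂gaussianMeasure n := h.riesz_add_riesz hp.totalDegree_le

theorem exists_feasible_riesz_eq (hd : ∀ j, dHalf (g j) ≤ d)
    (u : BoundedDegree n (2 * d) →ₗ[ℝ] ℝ) (hu : ∀ q ∈ qmCone g d, 0 ≤ u q)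
    (hu_le : ∀ p ∈ qmCone (![] : Fin 0 → MvPolynomial (Fin n) ℝ) d,
      u p ≤ ∫ x, eval x (p : MvPolynomial (Fin n) ℝ) ∂gaussianMeasure n) :
    ∃ a b, Feasible g d a b ∧ ∀ p : BoundedDegree n (2 * d), riesz a p = u p := by
  obtain ⟨U, hU⟩ := LinearMap.exists_extend u
  have hUu (p : BoundedDegree n (2 * d)) : U p = u p := LinearMap.congr_fun hU p
  have hsq {p : MvPolynomial (Fin n) ℝ} (hp : p.totalDegree ≤ d) :
      p ^ 2 ∈ BoundedDegree n (2 * d) :=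
    (mem_restrictTotalDegree _ _ _).2 (IsSOS.sq hp).totalDegree_le
  refine ⟨fun α => U (monomial α 1), fun α => gmom n α - U (monomial α 1),
    ⟨fun α _ => add_sub_cancel _ _, fun p hp => ?_, fun p hp => ?_, fun j p hp => ?_⟩,
    fun p => by rw [riesz_monomial_seq, hUu]⟩
  · rw [riesz_monomial_seq]
    exact (hu ⟨p ^ 2, hsq hp⟩ (IsSOS.sq hp).inQM).trans_eq (hUu _).symm
  · rw [riesz_sub_seq, riesz_gmom, riesz_monomial_seq, sub_nonneg]
    exact (hUu ⟨p ^ 2, hsq hp⟩).trans_le (hu_le _ (IsSOS.sq hp).inQM)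
  · have hmem := weightedMul_self_mem_qmCone hd j.succ ⟨p, (mem_restrictTotalDegree _ _ _).2 hp⟩
    rw [riesz_monomial_seq, mul_comm]
    exact (hu _ hmem).trans_eq ((hUu _).symm.trans (congrArg U (coe_weightedMul_self _ _)))

theorem integral_pos_of_mem_qmCone_empty {p : BoundedDegree n (2 * d)}
    (hp : p ∈ qmCone (![] : Fin 0 → MvPolynomial (Fin n) ℝ) d) (hp0 : p ≠ 0) :
    0 < ∫ x, eval x (p : MvPolynomial (Fin n) ℝ) ∂gaussianMeasure n := by
  rw [← setIntegral_univ]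
  exact setIntegral_eval_pos isOpen_univ Set.univ_nonempty
    (integrable_eval_gaussianMeasure _).integrableOn (Subtype.coe_ne_coe.2 hp0)
    fun x _ => (mem_qmCone_empty.1 hp).eval_nonneg x

theorem conicValues_qmCone_nonempty (g : Fin m → MvPolynomial (Fin n) ℝ)
    (L : BoundedDegree n (2 * d) →ₗ[ℝ] ℝ) (f : BoundedDegree n (2 * d)) :
    (conicValues (qmCone (![] : Fin 0 → MvPolynomial (Fin n) ℝ) d) (qmCone g d) L f).Nonempty := by
  obtain ⟨p, q, hp, hq, hpq⟩ := exists_isSOS_sub_eq ((mem_restrictTotalDegree _ _ _).1 f.2)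
  refine ⟨_, ⟨p, (mem_restrictTotalDegree _ _ _).2 hp.totalDegree_le⟩, ⟨hp.inQM, ?_⟩, rfl⟩
  rw [mem_qmCone, AddSubgroupClass.coe_sub, ← hpq, sub_sub_cancel]
  exact hq.inQM

theorem stmt7_general (g : Fin m → MvPolynomial (Fin n) ℝ)
    (hΩ : (interior (semialg g)).Nonempty) (f : MvPolynomial (Fin n) ℝ) (d : ℕ)
    (hd : ∀ j, dHalf (g j) ≤ d) (hfd : f.totalDegree ≤ 2 * d) :
    ∃ r : ℝ,
      IsGreatest {r : ℝ | ∃ u v, Feasible g d u v ∧ r = riesz u f} r ∧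
      IsLeast {r : ℝ | ∃ p : MvPolynomial (Fin n) ℝ, p.totalDegree ≤ 2 * d ∧
        IsSOS d p ∧ InQM g d (p - f) ∧
        r = ∫ x, eval x p ∂gaussianMeasure n} r := by
  obtain ⟨u, hu, hu_le, p, hp, hpf, hpu⟩ :=
    exists_conic_strong_duality isClosed_qmCone_empty (isClosed_qmCone hd hΩ)
      (L := (integralLinear _ integrable_eval_gaussianMeasure).domRestrict _)
      (fun _ => integral_pos_of_mem_qmCone_empty) (conicValues_qmCone_nonempty g _)
      ⟨f, (mem_restrictTotalDegree _ _ _).2 hfd⟩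
  obtain ⟨a, b, hab, hau⟩ := exists_feasible_riesz_eq hd u hu hu_le
  have hp_sos : IsSOS d (p : MvPolynomial (Fin n) ℝ) := mem_qmCone_empty.1 hp
  have hp_value : ∫ x, eval x (p : MvPolynomial (Fin n) ℝ) ∂gaussianMeasure n = riesz a f :=
    hpu.trans (hau ⟨f, _⟩).symm
  refine ⟨riesz a f, ⟨⟨a, b, hab, rfl⟩, ?_⟩,
    ⟨⟨p, hp_sos.totalDegree_le, hp_sos, hpf, hp_value.symm⟩, ?_⟩⟩
  · rintro _ ⟨u', v', huv', rfl⟩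
    exact (huv'.riesz_le_integral hp_sos hpf).trans_eq hp_value
  · rintro _ ⟨p', -, hp', hpf', rfl⟩
    exact hab.riesz_le_integral hp' hpf'

end MomentRelaxation

/-- for the Gaussian measure, `Ω = {x : g_j(x) ≥ 0}` with `Ω` and `ℝⁿ∖Ω` of
nonempty interior, and `f` strictly positive a.e. on `Ω`: for every `d ≥ d₀` the primal SDP
defining `ō_d(f)` attains its supremum, the dual SDP attains its infimum, and strong duality
holds (`ō_d(f) = ō*_d(f)`): there is a common value `r` which is the greatest element of the
primal value set and the least element of the dual value set. -/
theorem stmt7 {n m : ℕ} (g : Fin m → MvPolynomial (Fin n) ℝ)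
    (hΩ : (interior (semialg g)).Nonempty)
    (hΩc : (interior ((semialg g)ᶜ)).Nonempty)
    (f : MvPolynomial (Fin n) ℝ)
    (hf : ∀ᵐ x ∂(gaussianMeasure n).restrict (semialg g), 0 < eval x f)
    (d : ℕ) (hd : ∀ j, dHalf (g j) ≤ d) (hfd : f.totalDegree ≤ 2 * d) :
    ∃ r : ℝ,
      IsGreatest {r : ℝ | ∃ u v, Feasible g d u v ∧ r = riesz u f} r ∧
      IsLeast {r : ℝ | ∃ p : MvPolynomial (Fin n) ℝ, p.totalDegree ≤ 2 * d ∧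
        IsSOS d p ∧ InQM g d (p - f) ∧
        r = ∫ x, eval x p ∂gaussianMeasure n} r :=
  stmt7_general g hΩ f d hd hfd
end

section
/- Let μ be the standard Gaussian measure on ℝⁿ, let Ω = {x ∈ ℝⁿ : g_j(x) ≥ 0, j = 1,…,m}, and let f ∈ ℝ[x] be a polynomial that is nonnegative on Ω. Then the sequence (ō_d(f))_{d ≥ d₀} is monotone non-increasing (ō_{d+1}(f) ≤ ō_d(f) for all d ≥ d₀) and satisfies ō_d(f) ≥ ∫_Ω f dμ for every d ≥ d₀. -/
open MeasureTheory MvPolynomial Filter Topology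

/-!
A feasible pair is obtained by splitting `μ` into its restrictions to `Ω` and to `Ωᶜ`; the value of
this pair at `f` is `∫_Ω f dμ`. Raising the order only adds constraints. Both inequalities then
compare suprema, so what is left is that the set of values is bounded above: a monomial of degree at
most `2d` is a product of two monomials `x^β`, `x^γ` of degree at most `d`, and positivity of `L_u`
and `L_v` on squares gives `|u_{β+γ}| ≤ (u_{2β} + u_{2γ}) / 2 ≤ (y_{2β} + y_{2γ}) / 2`.
-/

section Riesz

variable {n : ℕ} (u : (Fin n →₀ ℕ) → ℝ)

theorem riesz_eq_constr (p : MvPolynomial (Fin n) ℝ) :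
    riesz u p = (basisMonomials (Fin n) ℝ).constr ℝ u p :=
  ((basisMonomials (Fin n) ℝ).constr_apply ℝ u p).symm

theorem riesz_add (p q : MvPolynomial (Fin n) ℝ) : riesz u (p + q) = riesz u p + riesz u q := by
  simp only [riesz_eq_constr, map_add]

theorem riesz_sub (p q : MvPolynomial (Fin n) ℝ) : riesz u (p - q) = riesz u p - riesz u q := by
  simp only [riesz_eq_constr, map_sub]

theorem riesz_monomial_one (α : Fin n →₀ ℕ) : riesz u (monomial α 1) = u α := by
  simpa only [riesz_eq_constr, coe_basisMonomials] using
    (basisMonomials (Fin n) ℝ).constr_basis ℝ u α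

end Riesz

section PositiveSemidefinite

variable {n d : ℕ} {u : (Fin n →₀ ℕ) → ℝ}

theorem LocPSD.mono {k l : ℕ} {g : MvPolynomial (Fin n) ℝ} (hkl : k ≤ l) (h : LocPSD l g u) :
    LocPSD k g u :=
  fun p hp => h p (hp.trans hkl)

theorem MomPSD.mono {e : ℕ} (hde : d ≤ e) (h : MomPSD e u) : MomPSD d u :=
  fun p hp => h p (hp.trans hde)

theorem MomPSD.abs_riesz_mul_le (h : MomPSD d u) {p q : MvPolynomial (Fin n) ℝ}
    (hp : p.totalDegree ≤ d) (hq : q.totalDegree ≤ d) :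
    |riesz u (p * q)| ≤ (riesz u (p ^ 2) + riesz u (q ^ 2)) / 2 := by
  have hadd : 0 ≤ riesz u ((p + q) ^ 2) := h _ ((totalDegree_add p q).trans (max_le hp hq))
  have hsub : 0 ≤ riesz u ((p - q) ^ 2) := h _ ((totalDegree_sub p q).trans (max_le hp hq))
  rw [show (p + q) ^ 2 = p ^ 2 + q ^ 2 + (p * q + p * q) by ring] at hadd
  rw [show (p - q) ^ 2 = p ^ 2 + q ^ 2 - (p * q + p * q) by ring] at hsub
  simp only [riesz_add, riesz_sub] at hadd hsub
  rw [abs_le]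
  constructor <;> linarith

theorem totalDegree_monomial_one_le {β : Fin n →₀ ℕ} (hβ : fdeg β ≤ d) :
    (monomial β (1 : ℝ)).totalDegree ≤ d :=
  (totalDegree_monomial_le β 1).trans hβ

theorem riesz_monomial_one_sq (β : Fin n →₀ ℕ) : riesz u (monomial β 1 ^ 2) = u (β + β) := by
  rw [sq, monomial_mul, one_mul, riesz_monomial_one]

theorem MomPSD.apply_add_self_nonneg (h : MomPSD d u) {β : Fin n →₀ ℕ} (hβ : fdeg β ≤ d) :
    0 ≤ u (β + β) :=
  riesz_monomial_one_sq (u := u) β ▸ h _ (totalDegree_monomial_one_le hβ)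

theorem MomPSD.abs_apply_add_le (h : MomPSD d u) {β γ : Fin n →₀ ℕ}
    (hβ : fdeg β ≤ d) (hγ : fdeg γ ≤ d) : |u (β + γ)| ≤ (u (β + β) + u (γ + γ)) / 2 := by
  have hmul := h.abs_riesz_mul_le (totalDegree_monomial_one_le hβ) (totalDegree_monomial_one_le hγ)
  rwa [monomial_mul, one_mul, riesz_monomial_one, riesz_monomial_one_sq,
    riesz_monomial_one_sq] at hmul

end PositiveSemidefinite

section MultiIndex

variable {n : ℕ}

theorem fdeg_add (β γ : Fin n →₀ ℕ) : fdeg (β + γ) = fdeg β + fdeg γ :=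
  map_add Finsupp.degree β γ

theorem exists_add_eq_fdeg_le {α : Fin n →₀ ℕ} {d e : ℕ} (hα : fdeg α ≤ d + e) :
    ∃ β γ, β + γ = α ∧ fdeg β ≤ d ∧ fdeg γ ≤ e := by
  obtain ⟨β, hβα, hβ⟩ := Finsupp.exists_le_degree_eq α (min d (fdeg α)) (min_le_right _ _)
  obtain ⟨γ, rfl⟩ := exists_add_of_le hβα
  change fdeg β = _ at hβ
  have hsum := fdeg_add β γ
  exact ⟨β, γ, rfl, by omega, by omega⟩

end MultiIndex

section Moments

variable {n : ℕ}

/-- The moment sequence of a measure `μ` on `ℝⁿ`. An entry is `0` when the corresponding monomial is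
not integrable, so this is meant for measures satisfying `HasFiniteMoments`. -/
noncomputable def moments (μ : Measure (Fin n → ℝ)) (α : Fin n →₀ ℕ) : ℝ :=
  ∫ x, (∏ i, x i ^ α i) ∂μ

/-- All moments of `μ` exist: every monomial is `μ`-integrable. -/
def HasFiniteMoments (μ : Measure (Fin n → ℝ)) : Prop :=
  ∀ α : Fin n →₀ ℕ, Integrable (fun x => ∏ i, x i ^ α i) μ

variable {μ : Measure (Fin n → ℝ)}

theorem HasFiniteMoments.restrict (hμ : HasFiniteMoments μ) (s : Set (Fin n → ℝ)) :
    HasFiniteMoments (μ.restrict s) :=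
  fun α => (hμ α).restrict

theorem HasFiniteMoments.riesz_moments (hμ : HasFiniteMoments μ) (p : MvPolynomial (Fin n) ℝ) :
    riesz (moments μ) p = ∫ x, eval x p ∂μ := by
  simp only [riesz, moments, eval_eq', ← integral_const_mul]
  exact (integral_finsetSum _ fun α _ => (hμ α).const_mul _).symm

theorem HasFiniteMoments.locPSD_moments (hμ : HasFiniteMoments μ) {g : MvPolynomial (Fin n) ℝ}
    (hg : ∀ᵐ x ∂μ, 0 ≤ eval x g) (k : ℕ) : LocPSD k g (moments μ) := by
  intro p _
  rw [hμ.riesz_moments]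
  simp only [eval_mul, eval_pow]
  exact integral_nonneg_of_ae (hg.mono fun x hx => mul_nonneg hx (sq_nonneg _))

theorem HasFiniteMoments.momPSD_moments (hμ : HasFiniteMoments μ) (d : ℕ) :
    MomPSD d (moments μ) := by
  simpa only [MomPSD, LocPSD, one_mul] using hμ.locPSD_moments (g := 1) (by simp) d

end Moments

section Gaussian

theorem integrable_pow_mul_exp_neg_sq_div_two (k : ℕ) :
    Integrable fun x : ℝ => x ^ k * Real.exp (-(x ^ 2) / 2) := by
  have hk : (-1 : ℝ) < k := neg_one_lt_zero.trans_le k.cast_nonneg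
  convert integrable_rpow_mul_exp_neg_mul_sq (b := 1 / 2) (by norm_num) hk using 3 with x
  · exact (Real.rpow_natCast x k).symm
  · ring_nf

theorem hasFiniteMoments_gaussianMeasure (n : ℕ) : HasFiniteMoments (gaussianMeasure n) := by
  intro α
  have hprod : Integrable fun x : Fin n → ℝ => ∏ i, (x i ^ α i * Real.exp (-(x i ^ 2) / 2)) :=
    Integrable.fintype_prod fun i => integrable_pow_mul_exp_neg_sq_div_two (α i)
  rw [gaussianMeasure, integrable_withDensity_iff (by fun_prop) (by simp)]
  refine (hprod.const_mul ((2 * Real.pi) ^ (-(n : ℝ) / 2))).congr (.of_forall fun x => ?_)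
  simp only
  rw [ENNReal.toReal_ofReal (by positivity), Finset.prod_mul_distrib, ← Real.exp_sum,
    ← Finset.sum_div, Finset.sum_neg_distrib]
  ring

end Gaussian

theorem measurableSet_semialg {n m : ℕ} (g : Fin m → MvPolynomial (Fin n) ℝ) :
    MeasurableSet (semialg g) := by
  simp only [semialg, Set.ofPred_forall]
  exact .iInter fun j => (isClosed_le continuous_const (continuous_eval (g j))).measurableSet

section Relaxation

variable {n m : ℕ}

/-- Feasibility for the relaxation of order `d` with an arbitrary sequence `y` in place of the
Gaussian moments; `Feasible` is the case `y = gmom n`. -/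
def FeasibleFor (y : (Fin n →₀ ℕ) → ℝ) (g : Fin m → MvPolynomial (Fin n) ℝ) (d : ℕ)
    (u v : (Fin n →₀ ℕ) → ℝ) : Prop :=
  (∀ α : Fin n →₀ ℕ, fdeg α ≤ 2 * d → u α + v α = y α) ∧
  MomPSD d u ∧ MomPSD d v ∧ ∀ j, LocPSD (d - dHalf (g j)) (g j) u

/-- The objective values `L_u(f)` attained by the feasible pairs of the relaxation of order `d`
for `y`. -/
def relaxationValues (y : (Fin n →₀ ℕ) → ℝ) (g : Fin m → MvPolynomial (Fin n) ℝ) (d : ℕ)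
    (f : MvPolynomial (Fin n) ℝ) : Set ℝ :=
  {r | ∃ u v, FeasibleFor y g d u v ∧ r = riesz u f}

/-- The optimal value of the relaxation of order `d` for `y`; `obar` is the case `y = gmom n`. Being
a real supremum, it is `0` if the relaxation is infeasible or unbounded. -/
noncomputable def relaxationSup (y : (Fin n →₀ ℕ) → ℝ) (g : Fin m → MvPolynomial (Fin n) ℝ)
    (d : ℕ) (f : MvPolynomial (Fin n) ℝ) : ℝ :=
  sSup (relaxationValues y g d f)

theorem obar_eq_relaxationSup (g : Fin m → MvPolynomial (Fin n) ℝ) (d : ℕ)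
    (f : MvPolynomial (Fin n) ℝ) :
    obar g d f = relaxationSup (moments (gaussianMeasure n)) g d f :=
  rfl

variable {g : Fin m → MvPolynomial (Fin n) ℝ} {d e : ℕ} {f : MvPolynomial (Fin n) ℝ}
  {y : (Fin n →₀ ℕ) → ℝ} {μ : Measure (Fin n → ℝ)}

theorem FeasibleFor.mono {u v : (Fin n →₀ ℕ) → ℝ} (hde : d ≤ e) (h : FeasibleFor y g e u v) :
    FeasibleFor y g d u v := by
  obtain ⟨hsum, hu, hv, hloc⟩ := h
  exact ⟨fun α hα => hsum α (by omega), hu.mono hde, hv.mono hde,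
    fun j => (hloc j).mono (tsub_le_tsub_right hde _)⟩

theorem FeasibleFor.abs_apply_add_le {u v : (Fin n →₀ ℕ) → ℝ} (h : FeasibleFor y g d u v)
    {β γ : Fin n →₀ ℕ} (hβ : fdeg β ≤ d) (hγ : fdeg γ ≤ d) :
    |u (β + γ)| ≤ (y (β + β) + y (γ + γ)) / 2 := by
  obtain ⟨hsum, hu, hv, -⟩ := h
  have apply_add_self_le : ∀ {δ}, fdeg δ ≤ d → u (δ + δ) ≤ y (δ + δ) := fun {δ} hδ => by
    have hnonneg := hv.apply_add_self_nonneg hδ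
    have hy := hsum (δ + δ) (by rw [fdeg_add]; omega)
    linarith
  linarith [hu.abs_apply_add_le hβ hγ, apply_add_self_le hβ, apply_add_self_le hγ]

theorem exists_forall_feasibleFor_abs_apply_le (y : (Fin n →₀ ℕ) → ℝ)
    (g : Fin m → MvPolynomial (Fin n) ℝ) {α : Fin n →₀ ℕ} (hα : fdeg α ≤ 2 * d) :
    ∃ C : ℝ, ∀ u v, FeasibleFor y g d u v → |u α| ≤ C := by
  obtain ⟨β, γ, rfl, hβ, hγ⟩ := exists_add_eq_fdeg_le (two_mul d ▸ hα)
  exact ⟨_, fun u v h => h.abs_apply_add_le hβ hγ⟩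

theorem bddAbove_relaxationValues (y : (Fin n →₀ ℕ) → ℝ) (g : Fin m → MvPolynomial (Fin n) ℝ)
    (hfd : f.totalDegree ≤ 2 * d) : BddAbove (relaxationValues y g d f) := by
  choose! C hC using fun α => exists_forall_feasibleFor_abs_apply_le (α := α) (d := d) y g
  refine ⟨∑ α ∈ f.support, |f.coeff α| * C α, ?_⟩
  rintro _ ⟨u, v, huv, rfl⟩
  refine Finset.sum_le_sum fun α hα => ?_
  calc f.coeff α * u α ≤ |f.coeff α| * |u α| := by rw [← abs_mul]; exact le_abs_self _
    _ ≤ |f.coeff α| * C α := by gcongr; exact hC α ((le_totalDegree hα).trans hfd) u v huv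

theorem HasFiniteMoments.feasibleFor_moments_restrict (hμ : HasFiniteMoments μ)
    (g : Fin m → MvPolynomial (Fin n) ℝ) (d : ℕ) :
    FeasibleFor (moments μ) g d (moments (μ.restrict (semialg g)))
      (moments (μ.restrict (semialg g)ᶜ)) := by
  have hg : ∀ᵐ x ∂μ.restrict (semialg g), x ∈ semialg g :=
    ae_restrict_mem (measurableSet_semialg g)
  exact ⟨fun α _ => integral_add_compl (measurableSet_semialg g) (hμ α),
    (hμ.restrict _).momPSD_moments d, (hμ.restrict _).momPSD_moments d,
    fun j => (hμ.restrict _).locPSD_moments (hg.mono fun _ hx => hx j) _⟩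

theorem HasFiniteMoments.setIntegral_mem_relaxationValues (hμ : HasFiniteMoments μ)
    (g : Fin m → MvPolynomial (Fin n) ℝ) (d : ℕ) (f : MvPolynomial (Fin n) ℝ) :
    ∫ x in semialg g, eval x f ∂μ ∈ relaxationValues (moments μ) g d f :=
  ⟨_, _, hμ.feasibleFor_moments_restrict g d, ((hμ.restrict _).riesz_moments f).symm⟩

theorem relaxationValues_subset (hde : d ≤ e) :
    relaxationValues y g e f ⊆ relaxationValues y g d f :=
  fun _ ⟨u, v, huv, hr⟩ => ⟨u, v, huv.mono hde, hr⟩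

theorem stmt8_general (hμ : HasFiniteMoments μ) (g : Fin m → MvPolynomial (Fin n) ℝ)
    (f : MvPolynomial (Fin n) ℝ) (hde : d ≤ e) (hfd : f.totalDegree ≤ 2 * d) :
    relaxationSup (moments μ) g e f ≤ relaxationSup (moments μ) g d f ∧
    ∫ x in semialg g, eval x f ∂μ ≤ relaxationSup (moments μ) g d f := by
  have hbdd := bddAbove_relaxationValues (moments μ) g hfd
  exact ⟨csSup_le_csSup hbdd ⟨_, hμ.setIntegral_mem_relaxationValues g e f⟩
    (relaxationValues_subset hde), le_csSup hbdd (hμ.setIntegral_mem_relaxationValues g d f)⟩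

end Relaxation

/-- for the Gaussian measure and `f` nonnegative on `Ω = {x : g_j(x) ≥ 0}`,
the sequence `(ō_d(f))_{d ≥ d₀}` is monotone non-increasing and `ō_d(f) ≥ ∫_Ω f dμ`. -/
theorem stmt8 {n m : ℕ} (g : Fin m → MvPolynomial (Fin n) ℝ)
    (f : MvPolynomial (Fin n) ℝ) (hf0 : ∀ x ∈ semialg g, 0 ≤ eval x f)
    (d : ℕ) (hd : ∀ j, dHalf (g j) ≤ d) (hfd : f.totalDegree ≤ 2 * d) :
    obar g (d + 1) f ≤ obar g d f ∧
    (∫ x in semialg g, eval x f ∂gaussianMeasure n) ≤ obar g d f := by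
  simp only [obar_eq_relaxationSup]
  exact stmt8_general (hasFiniteMoments_gaussianMeasure n) g f d.le_succ hfd
end

section
/- Let μ be the exponential measure on ℝⁿ, let Ω = {x ∈ ℝⁿ : g_j(x) ≥ 0, j = 1,…,m+n} ⊆ ℝⁿ₊ be a basic closed semi-algebraic set contained in the positive orthant, where g_{m+i}(x) = x_i for i = 1,…,n (Ω not necessarily compact), and let f ∈ ℝ[x] be a polynomial that vanishes on the topological boundary ∂Ω of Ω. For each i ∈ {1,…,n} and α ∈ ℕⁿ, define p_{i,α}(x) = ∂(x^α f(x))/∂x_i − x^α f(x). Then ∫_Ω (∂/∂x_i)(x^α f(x) exp(−(x_1+⋯+x_n))) dx = 0, i.e., ∫_Ω p_{i,α} dμ = 0, for every α ∈ ℕⁿ and every i = 1,…,n. -/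
open MeasureTheory MvPolynomial Filter Topology

/-- the basic closed semi-algebraic set `{x : g_j(x) ≥ 0, j = 1,…,m+n}` where the last `n`
polynomials are the coordinates `g_{m+i}(x) = x_i`; it is contained in the positive orthant. -/
def semialgPos {n m : ℕ} (g : Fin m → MvPolynomial (Fin n) ℝ) : Set (Fin n → ℝ) :=
  {x | (∀ j, 0 ≤ eval x (g j)) ∧ ∀ i, 0 ≤ x i}

/-!
Multiplying by the indicator of `Ω` turns `F = x^α f e^{-(x_1+⋯+x_n)}` into a function `h` which is
continuous, because `f` vanishes on `∂Ω`. A line meets the semialgebraic set `Ω` in a set with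
finite frontier, so along each line `h` is differentiable off finitely many points, with derivative
`h' = 1_Ω ∂F`, and the fundamental theorem of calculus gives
`h (x + v) - h x = ∫ t in 0..1, h' (x + t v)`. Integrating over `x` and using translation
invariance on both sides yields `0 = ∫ h'`. All integrals converge because `Ω` lies in the orthant,
where the exponential beats every polynomial.
-/

section LineDerivative

variable {E G : Type*} [AddCommGroup E] [Module ℝ E] [MeasurableSpace E] [MeasurableAdd₂ E]
  [MeasurableSMul ℝ E] {μ : Measure E} [SFinite μ] [μ.IsAddRightInvariant] [NormedAddCommGroup G]

theorem integrable_prod_comp_add_smul {φ : E → G} (hφ : Integrable φ μ) (ν : Measure ℝ)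
    [IsFiniteMeasure ν] (v : E) :
    Integrable (fun p : ℝ × E ↦ φ (p.2 + p.1 • v)) (ν.prod μ) := by
  have hshear : MeasurePreserving (fun p : ℝ × E ↦ (p.1, p.2 + p.1 • v)) (ν.prod μ) (ν.prod μ) :=
    (MeasurePreserving.id ν).skew_product (g := fun t x ↦ x + t • v)
      (measurable_snd.add (measurable_fst.smul_const v))
      (ae_of_all _ fun t ↦ map_add_right_eq_self μ (t • v))
  exact hshear.integrable_comp_of_integrable (hφ.comp_snd ν)

theorem integral_eq_zero_of_hasDerivAt_line_off_countable [NormedSpace ℝ G] [CompleteSpace G]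
    {h h' : E → G} {v : E} (hcont : ∀ x, Continuous fun t : ℝ ↦ h (x + t • v))
    (hderiv : ∀ x,
      {t : ℝ | ¬HasDerivAt (fun s : ℝ ↦ h (x + s • v)) (h' (x + t • v)) t}.Countable)
    (hint : Integrable h μ) (hint' : Integrable h' μ) :
    ∫ x, h' x ∂μ = 0 := by
  have hprod := integrable_prod_comp_add_smul hint' (volume.restrict (Set.Ioc (0 : ℝ) 1)) v
  have hFTC : ∀ᵐ x ∂μ, ∫ t in Set.Ioc (0 : ℝ) 1, h' (x + t • v) = h (x + v) - h x := by
    filter_upwards [hprod.prod_left_ae] with x hx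
    have hii : IntervalIntegrable (fun t : ℝ ↦ h' (x + t • v)) volume 0 1 :=
      (intervalIntegrable_iff_integrableOn_Ioc_of_le zero_le_one).2 hx
    rw [← intervalIntegral.integral_of_le zero_le_one,
      integral_eq_of_hasDerivAt_off_countable (fun t : ℝ ↦ h (x + t • v)) _ (hderiv x)
        (hcont x).continuousOn (fun t ht ↦ not_not.1 ht.2) hii]
    simp
  calc ∫ x, h' x ∂μ = ∫ t in Set.Ioc (0 : ℝ) 1, ∫ x, h' (x + t • v) ∂μ := by
        simp [integral_add_right_eq_self]
    _ = ∫ x, (∫ t in Set.Ioc (0 : ℝ) 1, h' (x + t • v)) ∂μ := integral_integral_swap hprod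
    _ = ∫ x, (h (x + v) - h x) ∂μ := integral_congr_ae hFTC
    _ = 0 := by
        rw [integral_sub (hint.comp_add_right v) hint, integral_add_right_eq_self, sub_self]

end LineDerivative

section ClosedSet

theorem hasDerivAt_indicator_of_notMem_frontier {𝕜 G : Type*} [NontriviallyNormedField 𝕜]
    [NormedAddCommGroup G] [NormedSpace 𝕜 G] {S : Set 𝕜} {F F' : 𝕜 → G}
    (hF : ∀ t ∈ S, HasDerivAt F (F' t) t) {t : 𝕜} (ht : t ∉ frontier S) :
    HasDerivAt (S.indicator F) (S.indicator F' t) t := by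
  by_cases htS : t ∈ S
  · have hS : S ∈ 𝓝 t := mem_interior_iff_mem_nhds.1 (by_contra fun h ↦ ht ⟨subset_closure htS, h⟩)
    rw [Set.indicator_of_mem htS]
    exact (hF t htS).congr_of_eventuallyEq
      (eventuallyEq_of_mem hS fun _ ↦ (Set.indicator_of_mem · F))
  · have hS : Sᶜ ∈ 𝓝 t := by
      rw [← frontier_compl] at ht
      exact mem_interior_iff_mem_nhds.1 (by_contra fun h ↦ ht ⟨subset_closure htS, h⟩)
    rw [Set.indicator_of_notMem htS]
    exact (hasDerivAt_const t 0).congr_of_eventuallyEq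
      (eventuallyEq_of_mem hS fun _ ↦ (Set.indicator_of_notMem · F))

theorem hasDerivAt_comp_add_smul_of_hasLineDerivAt {𝕜 E G : Type*} [NontriviallyNormedField 𝕜]
    [AddCommGroup E] [Module 𝕜 E] [NormedAddCommGroup G] [NormedSpace 𝕜 G] {F : E → G} {F' : G}
    {x v : E} {t : 𝕜} (hF : HasLineDerivAt 𝕜 F F' (x + t • v) v) :
    HasDerivAt (fun s : 𝕜 ↦ F (x + s • v)) F' t := by
  rw [HasLineDerivAt, ← sub_self t] at hF
  simpa [add_assoc, ← add_smul] using hF.comp_sub_const t t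

theorem setIntegral_lineDeriv_eq_zero_of_eqOn_frontier {E G : Type*} [AddCommGroup E] [Module ℝ E]
    [TopologicalSpace E] [ContinuousAdd E] [ContinuousSMul ℝ E] [MeasurableSpace E]
    [OpensMeasurableSpace E] [MeasurableAdd₂ E] [MeasurableSMul ℝ E] {μ : Measure E} [SFinite μ]
    [μ.IsAddRightInvariant] [NormedAddCommGroup G] [NormedSpace ℝ G] [CompleteSpace G]
    {Ω : Set E} {F F' : E → G} {v : E} (hΩ : IsClosed Ω)
    (hline : ∀ x, (frontier ((fun t : ℝ ↦ x + t • v) ⁻¹' Ω)).Countable)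
    (hderiv : ∀ x ∈ Ω, HasLineDerivAt ℝ F (F' x) x v) (hzero : Set.EqOn F 0 (frontier Ω))
    (hint : IntegrableOn F Ω μ) (hint' : IntegrableOn F' Ω μ) :
    ∫ x in Ω, F' x ∂μ = 0 := by
  have hcont_line (x : E) : Continuous fun t : ℝ ↦ x + t • v := by fun_prop
  have hderiv_line (x : E) (t : ℝ) (ht : x + t • v ∈ Ω) :
      HasDerivAt (fun s : ℝ ↦ F (x + s • v)) (F' (x + t • v)) t :=
    hasDerivAt_comp_add_smul_of_hasLineDerivAt (hderiv _ ht)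
  rw [← integral_indicator hΩ.measurableSet]
  refine integral_eq_zero_of_hasDerivAt_line_off_countable (h := Ω.indicator F) (v := v)
    (fun x ↦ ?_) (fun x ↦ ?_) (hint.integrable_indicator hΩ.measurableSet)
    (hint'.integrable_indicator hΩ.measurableSet)
  · refine continuous_indicator (s := (fun t : ℝ ↦ x + t • v) ⁻¹' Ω) (f := fun t ↦ F (x + t • v))
      (fun t ht ↦ hzero ((hcont_line x).frontier_preimage_subset Ω ht)) ?_
    rw [(hΩ.preimage (hcont_line x)).closure_eq]
    exact fun t ht ↦ (hderiv_line x t ht).continuousAt.continuousWithinAt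
  · refine (hline x).mono fun t ht ↦ by_contra fun htf ↦ ht ?_
    exact hasDerivAt_indicator_of_notMem_frontier (hderiv_line x) htf

end ClosedSet

section Semialgebraic

theorem frontier_iInter_subset {X κ : Type*} [TopologicalSpace X] [Finite κ] (s : κ → Set X) :
    frontier (⋂ j, s j) ⊆ ⋃ j, frontier (s j) := by
  rintro x ⟨hcl, hint⟩
  rw [interior_iInter_of_finite, Set.mem_iInter, not_forall] at hint
  obtain ⟨j, hj⟩ := hint
  exact Set.mem_iUnion.2 ⟨j, closure_mono (Set.iInter_subset s j) hcl, hj⟩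

theorem finite_frontier_nonneg_polynomial (q : Polynomial ℝ) :
    (frontier {t : ℝ | 0 ≤ q.eval t}).Finite := by
  obtain rfl | hq := eq_or_ne q 0
  · simp
  · exact (Polynomial.finite_setOfPred_isRoot hq).subset fun t ht ↦
      (frontier_le_subset_eq continuous_const q.continuous ht).symm

theorem exists_polynomial_eval_eq_eval_add_smul {R ι : Type*} [CommSemiring R]
    (P : MvPolynomial ι R) (x v : ι → R) :
    ∃ q : Polynomial R, ∀ t, q.eval t = eval (x + t • v) P := by
  refine ⟨aeval (fun j ↦ .C (x j) + .C (v j) * .X) P, fun t ↦ ?_⟩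
  rw [← Polynomial.coe_evalRingHom, map_aeval, MvPolynomial.eval]
  congr 2
  · ext; simp
  · ext; simp [mul_comm t]

variable {n m : ℕ} (g : Fin m → MvPolynomial (Fin n) ℝ)

theorem isClosed_semialg : IsClosed (semialg g) := by
  simp only [semialg, Set.ofPred_forall]
  exact isClosed_iInter fun j ↦ isClosed_le continuous_const (continuous_eval (g j))

theorem finite_frontier_line_semialg (x v : Fin n → ℝ) :
    (frontier ((fun t : ℝ ↦ x + t • v) ⁻¹' semialg g)).Finite := by
  choose q hq using fun j ↦ exists_polynomial_eval_eq_eval_add_smul (g j) x v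
  have hline : (fun t : ℝ ↦ x + t • v) ⁻¹' semialg g = ⋂ j, {t | 0 ≤ (q j).eval t} := by
    ext t
    simp [semialg, hq]
  rw [hline]
  exact (Set.finite_iUnion fun j ↦ finite_frontier_nonneg_polynomial (q j)).subset
    (frontier_iInter_subset _)

theorem semialgPos_eq_semialg_append : semialgPos g = semialg (Fin.append g X) := by
  ext x
  simp [semialgPos, semialg, Fin.forall_fin_add]

theorem semialgPos_subset_Ici : semialgPos g ⊆ Set.Ici 0 := fun _ hx ↦ hx.2

end Semialgebraic

section PolynomialTimesExponential

variable {ι : Type*} [Fintype ι]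

theorem hasFDerivAt_eval {𝕜 : Type*} [NontriviallyNormedField 𝕜] (P : MvPolynomial ι 𝕜)
    (x : ι → 𝕜) :
    HasFDerivAt (fun y ↦ eval y P)
      (∑ i, eval x (pderiv i P) • (ContinuousLinearMap.proj i : (ι → 𝕜) →L[𝕜] 𝕜)) x := by
  classical
  induction P using MvPolynomial.induction_on with
  | C a =>
    simp only [eval_C]
    exact (hasFDerivAt_const a x).congr_fderiv (by ext; simp)
  | add p q hp hq =>
    simp only [map_add]
    exact (hp.fun_add hq).congr_fderiv (by ext; simp [add_mul, Finset.sum_add_distrib])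
  | mul_X p j hp =>
    simp only [map_mul, eval_X]
    refine (hp.fun_mul (hasFDerivAt_apply j x)).congr_fderiv ?_
    ext y
    simp [pderiv_X, Pi.single_apply, apply_ite (eval x), Finset.sum_add_distrib, add_mul,
      Finset.mul_sum, mul_assoc]

theorem hasFDerivAt_eval_mul_exp_neg_sum (P : MvPolynomial ι ℝ) (x : ι → ℝ) :
    HasFDerivAt (fun y ↦ eval y P * Real.exp (-∑ j, y j))
      (∑ i, (eval x (pderiv i P - P) * Real.exp (-∑ j, x j)) •
        (ContinuousLinearMap.proj i : (ι → ℝ) →L[ℝ] ℝ)) x := by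
  have hsum : HasFDerivAt (fun y : ι → ℝ ↦ -∑ j, y j)
      (-∑ j, (ContinuousLinearMap.proj j : (ι → ℝ) →L[ℝ] ℝ)) x :=
    (HasFDerivAt.fun_sum fun j _ ↦ hasFDerivAt_apply j x).fun_neg
  refine ((hasFDerivAt_eval P x).fun_mul hsum.exp).congr_fderiv ?_
  ext y
  simp [sub_mul, Finset.mul_sum, Finset.sum_sub_distrib, mul_assoc, mul_left_comm, neg_add_eq_sub]

theorem fderiv_eval_mul_exp_neg_sum_single [DecidableEq ι] (P : MvPolynomial ι ℝ) (i : ι)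
    (x : ι → ℝ) :
    fderiv ℝ (fun y ↦ eval y P * Real.exp (-∑ j, y j)) x (Pi.single i 1) =
      eval x (pderiv i P - P) * Real.exp (-∑ j, x j) := by
  simp [(hasFDerivAt_eval_mul_exp_neg_sum P x).fderiv, Pi.single_apply]

theorem hasLineDerivAt_eval_mul_exp_neg_sum [DecidableEq ι] (P : MvPolynomial ι ℝ) (i : ι)
    (x : ι → ℝ) :
    HasLineDerivAt ℝ (fun y ↦ eval y P * Real.exp (-∑ j, y j))
      (eval x (pderiv i P - P) * Real.exp (-∑ j, x j)) x (Pi.single i 1) := by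
  rw [← fderiv_eval_mul_exp_neg_sum_single]
  exact (hasFDerivAt_eval_mul_exp_neg_sum P x).differentiableAt.hasFDerivAt.hasLineDerivAt _

theorem integrableOn_pow_mul_exp_neg_Ici (k : ℕ) :
    IntegrableOn (fun t : ℝ ↦ t ^ k * Real.exp (-t)) (Set.Ici 0) := by
  rw [integrableOn_Ici_iff_integrableOn_Ioi]
  refine (Real.GammaIntegral_convergent (s := k + 1) (by positivity)).congr_fun (fun t _ ↦ ?_)
    measurableSet_Ioi
  simp [mul_comm]

theorem integrableOn_eval_mul_exp_neg_sum_Ici (P : MvPolynomial ι ℝ) :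
    IntegrableOn (fun x : ι → ℝ ↦ eval x P * Real.exp (-∑ j, x j)) (Set.Ici 0) := by
  induction P using MvPolynomial.induction_on' with
  | add p q hp hq =>
    simp only [map_add, add_mul]
    exact Integrable.add hp hq
  | monomial u a =>
    have hprod : IntegrableOn (fun x : ι → ℝ ↦ ∏ j, x j ^ u j * Real.exp (-x j)) (Set.Ici 0) := by
      rw [IntegrableOn, ← Set.pi_univ_Ici, volume_pi, Measure.restrict_pi_pi]
      exact Integrable.fintype_prod fun j ↦ integrableOn_pow_mul_exp_neg_Ici (u j)
    refine IntegrableOn.congr_fun (hprod.const_mul a) (fun x _ ↦ ?_) measurableSet_Ici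
    simp [eval_monomial, Finsupp.prod_fintype, Finset.prod_mul_distrib, ← Real.exp_sum, mul_assoc]

end PolynomialTimesExponential

theorem setIntegral_expMeasure {n : ℕ} {s : Set (Fin n → ℝ)} (hs : MeasurableSet s)
    (hs0 : s ⊆ Set.Ici 0) (φ : (Fin n → ℝ) → ℝ) :
    ∫ x in s, φ x ∂expMeasure n = ∫ x in s, φ x * Real.exp (-∑ j, x j) := by
  rw [expMeasure, setIntegral_withDensity_eq_setIntegral_toReal_smul (by fun_prop) (by simp) _ hs,
    Measure.restrict_restrict_of_subset (by exact hs0)]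
  simp [ENNReal.toReal_ofReal, Real.exp_nonneg, mul_comm]

theorem setIntegral_pderiv_sub_self_mul_exp_neg_sum_eq_zero {n m : ℕ}
    (g : Fin m → MvPolynomial (Fin n) ℝ) (hg : semialg g ⊆ Set.Ici 0) (P : MvPolynomial (Fin n) ℝ)
    (hP : ∀ x ∈ frontier (semialg g), eval x P = 0) (i : Fin n) :
    ∫ x in semialg g, eval x (pderiv i P - P) * Real.exp (-∑ j, x j) = 0 :=
  setIntegral_lineDeriv_eq_zero_of_eqOn_frontier (isClosed_semialg g)
    (fun x ↦ (finite_frontier_line_semialg g x (Pi.single i 1)).countable)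
    (fun x _ ↦ hasLineDerivAt_eval_mul_exp_neg_sum P i x) (fun x hx ↦ by simp [hP x hx])
    ((integrableOn_eval_mul_exp_neg_sum_Ici P).mono_set hg)
    ((integrableOn_eval_mul_exp_neg_sum_Ici _).mono_set hg)

/-- Stokes identity for the exponential measure on a (possibly non-compact)
basic closed semi-algebraic set `Ω ⊆ ℝⁿ₊` (defined by `g_1,…,g_m` and `g_{m+i}(x)=x_i`):
if `f` vanishes on `∂Ω` then, for every multi-index `α` and coordinate `i`,
`∫_Ω ∂/∂x_i (x^α f(x) e^{−(x_1+⋯+x_n)}) dx = 0`, i.e. `∫_Ω p_{i,α} dμ = 0`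
where `p_{i,α} = ∂(x^α f)/∂x_i − x^α f`. -/
theorem stmt14 {n m : ℕ} (g : Fin m → MvPolynomial (Fin n) ℝ)
    (f : MvPolynomial (Fin n) ℝ)
    (hfb : ∀ x ∈ frontier (semialgPos g), eval x f = 0)
    (i : Fin n) (α : Fin n →₀ ℕ) :
    (∫ x in semialgPos g,
        fderiv ℝ (fun y : Fin n → ℝ =>
          eval y (monomial α (1 : ℝ) * f) * Real.exp (-(∑ j, y j))) x
          (Pi.single i 1) ∂volume) = 0 ∧
    (∫ x in semialgPos g, eval x (pStokesE f i α) ∂expMeasure n) = 0 := by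
  have hP : ∀ x ∈ frontier (semialgPos g), eval x (monomial α (1 : ℝ) * f) = 0 := fun x hx ↦ by
    rw [map_mul, hfb x hx, mul_zero]
  have hpos := semialgPos_subset_Ici g
  have hmeas : MeasurableSet (semialgPos g) := by
    rw [semialgPos_eq_semialg_append]
    exact (isClosed_semialg _).measurableSet
  have hstokes : ∫ x in semialgPos g, eval x (pStokesE f i α) * Real.exp (-∑ j, x j) = 0 := by
    rw [semialgPos_eq_semialg_append] at hP hpos ⊢
    exact setIntegral_pderiv_sub_self_mul_exp_neg_sum_eq_zero _ hpos _ hP i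
  refine ⟨?_, by rwa [setIntegral_expMeasure hmeas hpos]⟩
  simpa only [fderiv_eval_mul_exp_neg_sum_single, pStokesE] using hstokes
end
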